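/- Let d ≥ 3 be a fixed integer and p an odd prime with gcd(p,d) = 1. For every ε > 0 there exists N such that for all n ≥ N, the number of permutations P of [n]×[d] for which the matrix A(P), reduced modulo p, is singular over F_p (i.e., has determinant 0 in F_p) is at most ((1+ε)/(p−1))·(nd)!. -/

import Mathlib

open Finset

/-- Adjacency matrix of the directed configuration model. -/
def adjMat (n d : ℕ) (P : Equiv.Perm (Fin n × Fin d)) : Matrix (Fin n) (Fin n) ℤ :=
  fun k l => ((Finset.univ.filter (fun i : Fin d => (P (k, i)).1 = l)).card : ℤ)

/-! A singular `A` over a field with `q` elements has at least `q - 1` nonzero kernel vectors, so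
`(q - 1) · #{P | det A(P) = 0}` is at most `(nd)!` times the expected number of nonzero kernel
vectors, and it suffices to bound this expectation by `1 + o(1)`. The probability that `A v = 0`
depends only on the letter frequencies of `v`, which suggests three regimes.

* Sparse `v` contribute `O(1/√n)`: no row of `A` meets the support of a kernel vector in exactly one
  point, and a generating function bounds the number of such placements of the support.
* If `v` is neither sparse nor nearly equidistributed, the AM-GM inequality bounds the contribution
  of its letter frequencies by an exponential with base at most `1`. As `d ≥ 3`, base `1` occurs
  only for `v = 0` and for uniform frequencies, so by compactness the bases stay away from `1`.
* For nearly equidistributed `v`, expand the indicator of `A v = 0` into characters `ξ`. The `ξ` far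
  from all constants contribute an exponentially small amount. Since the expected character value is
  symmetric in `v` and `ξ`, what remains is, up to another exponentially small error, the sum of the
  probabilities that `A ξ = 0` over nearly constant `ξ`. There `ξ = 0` gives the main term `1`, the
  other sparse `ξ` give `O(1/√n)`, and no `ξ` close to a constant `c ≠ 0` lies in the kernel,
  because `d c ≠ 0`. -/

open scoped Nat

section Words

variable {X σ : Type*} [Fintype X] [DecidableEq σ]

/-- The number of positions at which the word `w` carries the letter `a`. -/
def letterCount (w : X → σ) (a : σ) : ℕ := #{x | w x = a}

/-- The empirical distribution of the letters of the word `w`. -/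
noncomputable def letterFreq (w : X → σ) (a : σ) : ℝ := letterCount w a / Fintype.card X

/-- The probability of the word `w` when its letters are drawn independently from its own
empirical distribution; it equals `exp (-|X| H)`, where `H` is the entropy of that distribution. -/
noncomputable def typeProb (w : X → σ) : ℝ := ∏ x, letterFreq w (w x)

lemma letterCount_eq_card (w : X → σ) (a : σ) :
    letterCount w a = Fintype.card {x // w x = a} :=
  (Fintype.card_subtype _).symm

lemma letterCount_le_card (w : X → σ) (a : σ) : letterCount w a ≤ Fintype.card X :=
  card_le_univ _

lemma letterCount_add_hammingDist (w : X → σ) (c : σ) :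
    letterCount w c + hammingDist w (fun _ ↦ c) = Fintype.card X :=
  card_filter_add_card_filter_not fun x ↦ w x = c

lemma letterCount_comp_perm (w : X → σ) (P : Equiv.Perm X) :
    letterCount (w ∘ P) = letterCount w :=
  funext fun _ ↦ card_equiv P fun x ↦ by simp

lemma letterFreq_nonneg (w : X → σ) (a : σ) : 0 ≤ letterFreq w a := by
  unfold letterFreq; positivity

lemma typeProb_nonneg (w : X → σ) : 0 ≤ typeProb w :=
  prod_nonneg fun _ _ ↦ letterFreq_nonneg w _

variable [Fintype σ]

lemma sum_letterCount (w : X → σ) : ∑ a, letterCount w a = Fintype.card X :=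
  (card_eq_sum_card_fiberwise fun _ _ ↦ mem_univ _).symm

lemma sum_letterFreq [Nonempty X] (w : X → σ) : ∑ a, letterFreq w a = 1 := by
  simp only [letterFreq, ← sum_div, ← Nat.cast_sum, sum_letterCount]
  exact div_self (mod_cast Fintype.card_ne_zero)

lemma prod_comp_eq_prod_pow_letterCount {M : Type*} [CommMonoid M] (w : X → σ) (g : σ → M) :
    ∏ x, g (w x) = ∏ a, g a ^ letterCount w a := by
  rw [← prod_fiberwise' univ w g]
  exact prod_congr rfl fun a _ ↦ prod_const (g a)

variable [DecidableEq X]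

/-- The words with the same letter counts as `w`, that is, the rearrangements of `w`. -/
def typeClass (w : X → σ) : Finset (X → σ) := {w' | letterCount w' = letterCount w}

lemma mem_typeClass {w w' : X → σ} : w' ∈ typeClass w ↔ letterCount w' = letterCount w := by
  simp [typeClass]

lemma mem_typeClass_self (w : X → σ) : w ∈ typeClass w := mem_typeClass.2 rfl

lemma card_typeClass_pos (w : X → σ) : 0 < #(typeClass w) :=
  card_pos.2 ⟨w, mem_typeClass_self w⟩

lemma letterFreq_eq_of_mem_typeClass {w w' : X → σ} (h : w' ∈ typeClass w) :
    letterFreq w' = letterFreq w := by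
  unfold letterFreq
  rw [mem_typeClass.1 h]

lemma prod_comp_eq_of_mem_typeClass {M : Type*} [CommMonoid M] {w w' : X → σ}
    (h : w' ∈ typeClass w) (g : σ → M) : ∏ x, g (w' x) = ∏ x, g (w x) := by
  simp only [prod_comp_eq_prod_pow_letterCount, mem_typeClass.1 h]

lemma typeProb_eq_of_mem_typeClass {w w' : X → σ} (h : w' ∈ typeClass w) :
    typeProb w' = typeProb w := by
  unfold typeProb
  rw [letterFreq_eq_of_mem_typeClass h, prod_comp_eq_of_mem_typeClass h]

lemma exists_perm_comp_eq {w w' : X → σ} (h : w' ∈ typeClass w) :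
    ∃ P : Equiv.Perm X, w ∘ P = w' := by
  have fiberEquiv (a : σ) : Nonempty ({x // w' x = a} ≃ {x // w x = a}) := by
    rw [← Fintype.card_eq, ← letterCount_eq_card, ← letterCount_eq_card, mem_typeClass.1 h]
  exact ⟨Equiv.ofFiberEquiv fun a ↦ (fiberEquiv a).some,
    funext fun x ↦ Equiv.ofFiberEquiv_map _ x⟩

lemma card_filter_comp_perm_eq {w w' : X → σ} (h : w' ∈ typeClass w) :
    #{P : Equiv.Perm X | w ∘ P = w'} = ∏ a, (letterCount w a)! := by
  obtain ⟨P₀, rfl⟩ := exists_perm_comp_eq h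
  calc #{P : Equiv.Perm X | w ∘ P = w ∘ P₀}
      = #{P : Equiv.Perm X | w ∘ P = w} := by
        refine card_equiv (Equiv.mulRight P₀⁻¹) fun P ↦ ?_
        simp only [mem_filter_univ, Equiv.coe_mulRight, Equiv.Perm.coe_mul, ← Function.comp_assoc]
        exact (Equiv.comp_symm_eq P₀ w (w ∘ P)).symm
    _ = ∏ a, (letterCount w a)! := by
        simp only [← Fintype.card_subtype, DomMulAct.stabilizer_card, letterCount_eq_card]

lemma sum_perm_comp {K : Type*} [CommSemiring K] (w : X → σ) (Φ : (X → σ) → K) :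
    ∑ P : Equiv.Perm X, Φ (w ∘ P) =
      (∏ a, (letterCount w a)! : ℕ) * ∑ w' ∈ typeClass w, Φ w' := by
  rw [← sum_fiberwise_of_maps_to (t := typeClass w) (g := fun P : Equiv.Perm X ↦ w ∘ P)
    fun P _ ↦ mem_typeClass.2 (letterCount_comp_perm w P), mul_sum]
  refine sum_congr rfl fun w' hw' ↦ ?_
  rw [← card_filter_comp_perm_eq hw', ← nsmul_eq_mul, ← sum_const]
  exact sum_congr rfl fun P hP ↦ by rw [(mem_filter_univ P).1 hP]

lemma prod_factorial_mul_card_typeClass (w : X → σ) :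
    (∏ a, (letterCount w a)!) * #(typeClass w) = (Fintype.card X)! := by
  simpa [Fintype.card_perm] using (sum_perm_comp w fun _ ↦ (1 : ℕ)).symm

lemma sum_perm_comp_div_factorial {K : Type*} [Field K] [CharZero K]
    (w : X → σ) (Φ : (X → σ) → K) :
    (∑ P : Equiv.Perm X, Φ (w ∘ P)) / (Fintype.card X)! =
      (∑ w' ∈ typeClass w, Φ w') / #(typeClass w) := by
  rw [sum_perm_comp, ← prod_factorial_mul_card_typeClass w, Nat.cast_mul]
  exact mul_div_mul_left _ _
    (Nat.cast_ne_zero.2 (prod_ne_zero_iff.2 fun a _ ↦ (Nat.factorial_pos _).ne'))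

lemma card_image_letterCount_le :
    #(univ.image (letterCount : (X → σ) → σ → ℕ)) ≤
      (Fintype.card X + 1) ^ Fintype.card σ := by
  calc #(univ.image (letterCount : (X → σ) → σ → ℕ))
      ≤ #(Fintype.piFinset fun _ : σ ↦ range (Fintype.card X + 1)) := by
        refine card_le_card (image_subset_iff.2 fun w _ ↦ Fintype.mem_piFinset.2 fun a ↦ ?_)
        exact mem_range_succ_iff.2 (letterCount_le_card w a)
    _ = (Fintype.card X + 1) ^ Fintype.card σ := by simp

lemma sum_le_of_forall_sum_typeClass_le {F : (X → σ) → ℝ} {B : ℝ} (hB : 0 ≤ B)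
    (hF : ∀ w, ∑ w' ∈ typeClass w, F w' ≤ B) :
    ∑ w, F w ≤ (Fintype.card X + 1) ^ Fintype.card σ * B := by
  calc ∑ w, F w
      = ∑ c ∈ univ.image letterCount, ∑ w with letterCount w = c, F w :=
        (sum_fiberwise_of_maps_to (fun w _ ↦ mem_image_of_mem _ (mem_univ w)) F).symm
    _ ≤ ∑ _c ∈ univ.image (letterCount : (X → σ) → σ → ℕ), B := by
        refine sum_le_sum fun c hc ↦ ?_
        obtain ⟨w, -, rfl⟩ := mem_image.1 hc
        exact hF w
    _ ≤ (Fintype.card X + 1) ^ Fintype.card σ * B := by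
        rw [sum_const, nsmul_eq_mul]
        gcongr
        exact mod_cast card_image_letterCount_le

lemma sum_prod_letterFreq (w : X → σ) : ∑ w' : X → σ, ∏ x, letterFreq w (w' x) = 1 := by
  rw [← Fintype.prod_sum fun (_ : X) ↦ letterFreq w]
  exact prod_eq_one fun x _ ↦ have : Nonempty X := ⟨x⟩; sum_letterFreq w

lemma card_typeClass_mul_typeProb_le_one (w : X → σ) : #(typeClass w) * typeProb w ≤ 1 := by
  rw [← sum_prod_letterFreq w, ← nsmul_eq_mul, ← sum_const]
  calc ∑ _w' ∈ typeClass w, typeProb w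
      = ∑ w' ∈ typeClass w, ∏ x, letterFreq w (w' x) :=
        sum_congr rfl fun _ hw' ↦ (prod_comp_eq_of_mem_typeClass hw' _).symm
    _ ≤ ∑ w' : X → σ, ∏ x, letterFreq w (w' x) :=
        sum_le_univ_sum_of_nonneg fun w' ↦ prod_nonneg fun x _ ↦ letterFreq_nonneg w _

lemma sum_typeProb_le : ∑ w : X → σ, typeProb w ≤ (Fintype.card X + 1) ^ Fintype.card σ := by
  rw [← mul_one ((_ : ℝ) ^ _)]
  refine sum_le_of_forall_sum_typeClass_le zero_le_one fun w ↦ ?_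
  rw [sum_congr rfl fun _ hw' ↦ typeProb_eq_of_mem_typeClass hw', sum_const, nsmul_eq_mul]
  exact card_typeClass_mul_typeProb_le_one w

lemma factorial_mul_pow_le_factorial_mul_pow (k l : ℕ) : k ! * k ^ l ≤ l ! * k ^ k := by
  rcases le_total k l with h | h
  · calc k ! * k ^ l = k ! * k ^ (l - k) * k ^ k := by
          rw [mul_assoc, ← pow_add, Nat.sub_add_cancel h]
      _ ≤ l ! * k ^ k := Nat.mul_le_mul_right _ (Nat.factorial_mul_pow_sub_le_factorial h)
  · calc k ! * k ^ l = l ! * (k.descFactorial (k - l) * k ^ l) := by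
          rw [← Nat.factorial_mul_descFactorial (Nat.sub_le k l), Nat.sub_sub_self h, mul_assoc]
      _ ≤ l ! * (k ^ (k - l) * k ^ l) := by
          gcongr
          exact Nat.descFactorial_le_pow k _
      _ = l ! * k ^ k := by rw [← pow_add, Nat.sub_add_cancel h]

lemma card_typeClass_mul_prod_pow_le (w v : X → σ) :
    #(typeClass v) * ∏ a, letterCount w a ^ letterCount v a ≤
      #(typeClass w) * ∏ a, letterCount w a ^ letterCount w a := by
  have factorials : (∏ a, (letterCount w a)!) * ∏ a, letterCount w a ^ letterCount v a ≤
      (∏ a, (letterCount v a)!) * ∏ a, letterCount w a ^ letterCount w a := by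
    simp only [← prod_mul_distrib]
    exact prod_le_prod' fun a _ ↦ factorial_mul_pow_le_factorial_mul_pow _ _
  refine Nat.le_of_mul_le_mul_left ?_
    (show 0 < (∏ a, (letterCount w a)!) * ∏ a, (letterCount v a)! from by positivity)
  have hw := prod_factorial_mul_card_typeClass w
  have hv := prod_factorial_mul_card_typeClass v
  calc _ = (Fintype.card X)! *
          ((∏ a, (letterCount w a)!) * ∏ a, letterCount w a ^ letterCount v a) := by
        rw [← hv]; ring
    _ ≤ (Fintype.card X)! *
          ((∏ a, (letterCount v a)!) * ∏ a, letterCount w a ^ letterCount w a) := by gcongr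
    _ = _ := by rw [← hw]; ring

lemma sum_typeClass_prod_letterFreq_le (w v : X → σ) :
    ∑ v' ∈ typeClass v, ∏ x, letterFreq w (v' x) ≤ #(typeClass w) * typeProb w := by
  have weight (v : X → σ) : ∏ x, letterFreq w (v x) =
      (∏ a, letterCount w a ^ letterCount v a : ℕ) / (Fintype.card X : ℝ) ^ Fintype.card X := by
    rw [← prod_comp_eq_prod_pow_letterCount, Nat.cast_prod, ← card_univ (α := X), ← prod_const,
      ← prod_div_distrib]
    rfl
  rw [sum_congr rfl fun v' hv' ↦ prod_comp_eq_of_mem_typeClass hv' _, sum_const, nsmul_eq_mul,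
    typeProb, weight, weight, ← mul_div_assoc, ← mul_div_assoc]
  exact div_le_div_of_nonneg_right (mod_cast card_typeClass_mul_prod_pow_le w v) (by positivity)

lemma one_le_card_typeClass_mul_typeProb (w : X → σ) :
    1 ≤ (Fintype.card X + 1) ^ Fintype.card σ * (#(typeClass w) * typeProb w) :=
  (sum_prod_letterFreq w).ge.trans <| sum_le_of_forall_sum_typeClass_le
    (mul_nonneg (Nat.cast_nonneg _) (typeProb_nonneg w)) (sum_typeClass_prod_letterFreq_le w)

end Words

section Lift

variable {ι κ σ : Type*} [Fintype ι] [Fintype κ] [DecidableEq σ]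

lemma letterCount_comp_fst (v : ι → σ) (a : σ) :
    letterCount (v ∘ Prod.fst : ι × κ → σ) a = letterCount v a * Fintype.card κ := by
  rw [letterCount, letterCount, ← card_univ, ← card_product]
  congr 1
  ext
  simp

variable [Nonempty κ]

lemma letterFreq_comp_fst (v : ι → σ) :
    letterFreq (v ∘ Prod.fst : ι × κ → σ) = letterFreq v := by
  ext a
  rw [letterFreq, letterFreq, letterCount_comp_fst, Fintype.card_prod]
  push_cast
  exact mul_div_mul_right _ _ (mod_cast Fintype.card_ne_zero)

lemma typeProb_comp_fst (v : ι → σ) :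
    typeProb (v ∘ Prod.fst : ι × κ → σ) = typeProb v ^ Fintype.card κ := by
  simp only [typeProb, letterFreq_comp_fst, Fintype.prod_prod_type, Function.comp_apply,
    prod_const, card_univ, prod_pow]

end Lift

section Orthogonality

variable {R ι : Type*} [CommRing R] [Fintype R] [DecidableEq R] [Fintype ι] [DecidableEq ι]

lemma sum_prod_addChar_mul {ψ : AddChar R ℂ} (hψ : ψ.IsPrimitive) (b : ι → R) :
    ∑ t : ι → R, ∏ i, ψ (t i * b i) =
      if b = 0 then (Fintype.card R : ℂ) ^ Fintype.card ι else 0 := by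
  rw [← Fintype.prod_sum fun i t ↦ ψ (t * b i)]
  simp only [AddChar.sum_mulShift _ hψ]
  split_ifs with hb
  · simp [hb]
  · obtain ⟨i, hi⟩ := Function.ne_iff.1 hb
    exact prod_eq_zero (mem_univ i) (by simpa using hi)

end Orthogonality

section Coefficients

variable {σ : Type*} [Fintype σ] [DecidableEq σ]

lemma card_filter_rows_mul_prod_le {ι κ : Type*} [Fintype ι] [DecidableEq ι] [Fintype κ]
    [DecidableEq κ] (w : ι × κ → σ) (S : Finset (κ → σ)) {x : σ → ℝ} (hx : ∀ a, 0 ≤ x a) :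
    #{w' ∈ typeClass w | ∀ k, Function.curry w' k ∈ S} * ∏ s, x (w s) ≤
      (∑ ρ ∈ S, ∏ i, x (ρ i)) ^ Fintype.card ι := by
  set W := {w' ∈ typeClass w | ∀ k, Function.curry w' k ∈ S}
  calc #W * ∏ s, x (w s)
      = ∑ w' ∈ W, ∏ k, ∏ i, x (Function.curry w' k i) := by
        rw [← nsmul_eq_mul, ← sum_const]
        refine sum_congr rfl fun w' hw' ↦ ?_
        rw [← prod_comp_eq_of_mem_typeClass (mem_filter.1 hw').1, Fintype.prod_prod_type]
        rfl
    _ = ∑ r ∈ W.map (Equiv.curry ι κ σ).toEmbedding, ∏ k, ∏ i, x (r k i) := by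
        rw [sum_map]; rfl
    _ ≤ ∑ r ∈ Fintype.piFinset fun _ : ι ↦ S, ∏ k, ∏ i, x (r k i) := by
        refine sum_le_sum_of_subset_of_nonneg (fun r hr ↦ ?_)
          fun r _ _ ↦ prod_nonneg fun k _ ↦ prod_nonneg fun i _ ↦ hx _
        obtain ⟨w', hw', rfl⟩ := mem_map.1 hr
        exact Fintype.mem_piFinset.2 (mem_filter.1 hw').2
    _ = (∑ ρ ∈ S, ∏ i, x (ρ i)) ^ Fintype.card ι := by
        rw [← prod_univ_sum (fun _ : ι ↦ S) fun _ ρ ↦ ∏ i, x (ρ i), prod_const, card_univ]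

variable {X : Type*} [Fintype X] [DecidableEq X]

lemma sum_prod_addChar_letterCount {M : ℕ} [NeZero M] (hM : Fintype.card X < M)
    {ψ : AddChar (ZMod M) ℂ} (hψ : ψ.IsPrimitive) (w w' : X → σ) :
    ∑ τ : σ → ZMod M, (∏ a, ψ (-(τ a * letterCount w a))) * ∏ x, ψ (τ (w' x)) =
      if w' ∈ typeClass w then (M : ℂ) ^ Fintype.card σ else 0 := by
  have counts (τ : σ → ZMod M) :
      (∏ a, ψ (-(τ a * letterCount w a))) * ∏ x, ψ (τ (w' x)) =
        ∏ a, ψ (τ a * ((letterCount w' a : ZMod M) - letterCount w a)) := by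
    rw [prod_comp_eq_prod_pow_letterCount w' fun a ↦ ψ (τ a), ← prod_mul_distrib]
    refine prod_congr rfl fun a _ ↦ ?_
    rw [← AddChar.map_nsmul_eq_pow, ← AddChar.map_add_eq_mul, nsmul_eq_mul]
    ring_nf
  have cast_eq_iff (a : σ) : (letterCount w' a : ZMod M) = letterCount w a ↔
      letterCount w' a = letterCount w a :=
    ⟨fun h ↦ CharP.natCast_injOn_Iio (ZMod M) M ((letterCount_le_card w' a).trans_lt hM)
      ((letterCount_le_card w a).trans_lt hM) h, congrArg _⟩
  simp only [counts]
  rw [sum_prod_addChar_mul hψ fun a ↦ (letterCount w' a : ZMod M) - letterCount w a]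
  simp only [funext_iff, Pi.zero_apply, sub_eq_zero, cast_eq_iff, mem_typeClass, ZMod.card]

/-- The sum over a type class is a coefficient of the polynomial `∏ x, ∑ a, θ a * h x a` in `θ`;
averaging over the roots of unity of order `|X| + 1` extracts it. -/
lemma norm_sum_typeClass_prod_le (w : X → σ) (h : X → σ → ℂ) {B : ℝ}
    (hB : ∀ θ : σ → ℂ, (∀ a, ‖θ a‖ = 1) → ∏ x, ‖∑ a, θ a * h x a‖ ≤ B) :
    ‖∑ w' ∈ typeClass w, ∏ x, h x (w' x)‖ ≤ B := by
  obtain ⟨M, hM, _⟩ : ∃ M, Fintype.card X < M ∧ NeZero M :=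
    ⟨_, Nat.lt_succ_self _, inferInstance⟩
  let ψ : AddChar (ZMod M) ℂ := ZMod.stdAddChar
  let phase (τ : σ → ZMod M) : ℂ := ∏ a, ψ (-(τ a * letterCount w a))
  have extraction : (M : ℂ) ^ Fintype.card σ * ∑ w' ∈ typeClass w, ∏ x, h x (w' x) =
      ∑ τ : σ → ZMod M, phase τ * ∏ x, ∑ a, ψ (τ a) * h x a := by
    simp only [Fintype.prod_sum fun x a ↦ ψ (_) * h x a, prod_mul_distrib, mul_sum, ← mul_assoc]
    rw [sum_comm]
    simp only [← sum_mul, phase, ψ,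
      sum_prod_addChar_letterCount hM (ZMod.isPrimitive_stdAddChar M), ite_mul, zero_mul]
    rw [sum_ite_mem, univ_inter]
  have term_le (τ : σ → ZMod M) : ‖phase τ * ∏ x, ∑ a, ψ (τ a) * h x a‖ ≤ B := by
    rw [norm_mul, norm_prod, norm_prod]
    simpa only [AddChar.norm_apply, prod_const_one, one_mul] using
      hB (fun a ↦ ψ (τ a)) fun a ↦ AddChar.norm_apply ψ _
  have hM0 : (0 : ℝ) < (M : ℝ) ^ Fintype.card σ :=
    pow_pos (mod_cast Nat.pos_of_neZero M) _
  refine le_of_mul_le_mul_left ?_ hM0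
  calc (M : ℝ) ^ Fintype.card σ * ‖∑ w' ∈ typeClass w, ∏ x, h x (w' x)‖
      = ‖∑ τ : σ → ZMod M, phase τ * ∏ x, ∑ a, ψ (τ a) * h x a‖ := by
        rw [← extraction, norm_mul, norm_pow, Complex.norm_natCast]
    _ ≤ ∑ _τ : σ → ZMod M, B := norm_sum_le_of_le _ fun τ _ ↦ term_le τ
    _ = (M : ℝ) ^ Fintype.card σ * B := by simp [ZMod.card]

end Coefficients

section Rows

variable {ι κ σ : Type*} [Fintype ι] [DecidableEq ι] [Fintype κ] [DecidableEq κ] [Fintype σ]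
  [DecidableEq σ]

lemma card_filter_perm_rows_div_factorial (w : ι × κ → σ) (S : Finset (κ → σ)) :
    (#{P : Equiv.Perm (ι × κ) | ∀ k, Function.curry (w ∘ P) k ∈ S} : ℝ) /
        (Fintype.card (ι × κ))! =
      #{w' ∈ typeClass w | ∀ k, Function.curry w' k ∈ S} / #(typeClass w) := by
  have average := sum_perm_comp_div_factorial w fun w' ↦
    if ∀ k, Function.curry w' k ∈ S then (1 : ℝ) else 0
  rwa [sum_boole, sum_boole] at average

lemma card_perms_div_mul_le (w : ι × κ → σ) {S : Finset (κ → σ)} {Q : Finset (Equiv.Perm (ι × κ))}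
    (hQ : ∀ P ∈ Q, ∀ k, Function.curry (w ∘ P) k ∈ S) {x : σ → ℝ} (hx : ∀ a, 0 ≤ x a) :
    (#Q : ℝ) / (Fintype.card (ι × κ))! * (#(typeClass w) * ∏ s, x (w s)) ≤
      (∑ ρ ∈ S, ∏ i, x (ρ i)) ^ Fintype.card ι := by
  have hpos : (#(typeClass w) : ℝ) ≠ 0 := mod_cast (card_typeClass_pos w).ne'
  calc (#Q : ℝ) / (Fintype.card (ι × κ))! * (#(typeClass w) * ∏ s, x (w s))
      ≤ (#{P : Equiv.Perm (ι × κ) | ∀ k, Function.curry (w ∘ P) k ∈ S} : ℝ) /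
          (Fintype.card (ι × κ))! * (#(typeClass w) * ∏ s, x (w s)) := by
        have := prod_nonneg fun s (_ : s ∈ univ) ↦ hx (w s)
        gcongr
        exact fun P hP ↦ mem_filter.2 ⟨mem_univ P, hQ P hP⟩
    _ ≤ _ := by
        rw [card_filter_perm_rows_div_factorial, ← mul_assoc, div_mul_cancel₀ _ hpos]
        exact card_filter_rows_mul_prod_le w S hx

end Rows

section KernelProb

variable {n : ℕ} {M : Type*} [AddCommMonoid M] [DecidableEq M]

/-- The probability that the adjacency matrix of a uniformly random permutation of
`[n] × [d]` annihilates `v`. -/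
noncomputable def kernelProb (d : ℕ) (v : Fin n → M) : ℝ :=
  #{P : Equiv.Perm (Fin n × Fin d) | ∀ k, ∑ i, v (P (k, i)).1 = 0} / (n * d)!

lemma kernelProb_nonneg (d : ℕ) (v : Fin n → M) : 0 ≤ kernelProb d v := by
  unfold kernelProb; positivity

lemma kernelProb_mul_le_of_rows {σ : Type*} [Fintype σ] [DecidableEq σ] {d : ℕ} (v : Fin n → M)
    (g : M → σ) {S : Finset (Fin d → σ)} (hS : ∀ ρ : Fin d → M, ∑ i, ρ i = 0 → g ∘ ρ ∈ S)
    {x : σ → ℝ} (hx : ∀ a, 0 ≤ x a) :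
    kernelProb d v * (#(typeClass fun s : Fin n × Fin d ↦ g (v s.1)) *
      ∏ s : Fin n × Fin d, x (g (v s.1))) ≤ (∑ ρ ∈ S, ∏ i, x (ρ i)) ^ n := by
  have bound := card_perms_div_mul_le (fun s : Fin n × Fin d ↦ g (v s.1))
    (Q := {P | ∀ k, ∑ i, v (P (k, i)).1 = 0}) (fun P hP k ↦ hS _ ((mem_filter.1 hP).2 k)) hx
  rwa [Fintype.card_fin, Fintype.card_prod, Fintype.card_fin, Fintype.card_fin] at bound

end KernelProb

section Sparse

lemma pow_le_choose_mul_pow {N k : ℕ} (hk : k ≤ N) : N ^ k ≤ N.choose k * k ^ k := by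
  have factors : N ^ k * k ! ≤ N.descFactorial k * k ^ k := by
    rw [← Nat.descFactorial_self, Nat.descFactorial_eq_prod_range, Nat.descFactorial_eq_prod_range,
      ← card_range k, ← prod_const, ← prod_const, card_range, ← prod_mul_distrib,
      ← prod_mul_distrib]
    refine prod_le_prod' fun i _ ↦ ?_
    rw [Nat.mul_sub, Nat.sub_mul]
    exact Nat.sub_le_sub_left (by rw [mul_comm i]; exact Nat.mul_le_mul_right i hk) _
  rw [Nat.descFactorial_eq_factorial_mul_choose] at factors
  refine Nat.le_of_mul_le_mul_right (factors.trans_eq ?_) k.factorial_pos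
  ring

lemma one_le_choose_mul_div_pow {N k : ℕ} (hk : k ≤ N) :
    (1 : ℝ) ≤ N.choose k * (k / N : ℝ) ^ k := by
  rcases N.eq_zero_or_pos with rfl | hN
  · simp [Nat.le_zero.1 hk]
  · rw [div_pow, mul_div_assoc', one_le_div (by positivity)]
    exact mod_cast pow_le_choose_mul_pow hk

section Bool

variable {X : Type*} [Fintype X] [DecidableEq X]

lemma card_typeClass_bool (w : X → Bool) :
    #(typeClass w) = (Fintype.card X).choose (letterCount w true) := by
  have counts := sum_letterCount w
  rw [Fintype.sum_bool] at counts
  rw [Nat.choose_eq_factorial_div_factorial (letterCount_le_card w true),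
    ← prod_factorial_mul_card_typeClass w, Fintype.prod_bool, ← counts, Nat.add_sub_cancel_left]
  exact (Nat.mul_div_cancel_left _ (by positivity)).symm

lemma one_le_card_typeClass_bool_mul (w : X → Bool) {z : ℝ}
    (hz : z ^ 2 = letterCount w true / Fintype.card X) :
    1 ≤ #(typeClass w) * z ^ letterCount w true * z ^ letterCount w true := by
  rw [mul_assoc, ← mul_pow, ← sq, hz, card_typeClass_bool]
  exact one_le_choose_mul_div_pow (letterCount_le_card w true)

end Bool

lemma sum_pow_letterCount_ne_one_le {κ : Type*} [Fintype κ] [DecidableEq κ] {z : ℝ} (hz0 : 0 ≤ z)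
    (hz1 : z ≤ 1) :
    ∑ ρ : κ → Bool with letterCount ρ true ≠ 1, z ^ letterCount ρ true ≤
      1 + 2 ^ Fintype.card κ * z ^ 2 := by
  calc ∑ ρ : κ → Bool with letterCount ρ true ≠ 1, z ^ letterCount ρ true
      ≤ ∑ ρ : κ → Bool with letterCount ρ true ≠ 1,
          ((if ρ = fun _ ↦ false then 1 else 0) + z ^ 2) := by
        refine sum_le_sum fun ρ hρ ↦ ?_
        rw [mem_filter_univ] at hρ
        split_ifs with h
        · exact (pow_le_one₀ hz0 hz1).trans (le_add_of_nonneg_right (by positivity))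
        · rw [zero_add]
          refine pow_le_pow_of_le_one hz0 hz1 ((Nat.two_le_iff _).2 ⟨fun h0 ↦ h ?_, hρ⟩)
          simpa [letterCount, filter_eq_empty_iff, funext_iff] using h0
    _ ≤ ∑ ρ : κ → Bool, ((if ρ = fun _ ↦ false then 1 else 0) + z ^ 2) :=
        sum_le_univ_sum_of_nonneg fun ρ ↦ by positivity
    _ = 1 + 2 ^ Fintype.card κ * z ^ 2 := by simp [sum_add_distrib]

variable {n : ℕ} {M : Type*} [AddCommMonoid M] [DecidableEq M]

lemma letterCount_support_ne_one {κ : Type*} [Fintype κ] {ρ : κ → M} (hρ : ∑ i, ρ i = 0) :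
    letterCount (fun i ↦ decide (ρ i ≠ 0)) true ≠ 1 := by
  intro h
  obtain ⟨i, hi⟩ := card_eq_one.1 h
  have ne_zero_iff (j : κ) : ρ j ≠ 0 ↔ j = i := by simpa using congrArg (j ∈ ·) hi
  have hsum : ∑ j, ρ j = ρ i :=
    Fintype.sum_eq_single i fun j hj ↦ not_not.1 fun h ↦ hj ((ne_zero_iff j).1 h)
  exact (ne_zero_iff i).2 rfl (hsum ▸ hρ)

lemma letterCount_support (d : ℕ) (v : Fin n → M) :
    letterCount (fun s : Fin n × Fin d ↦ decide (v s.1 ≠ 0)) true = hammingNorm v * d := by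
  refine (letterCount_comp_fst (fun k ↦ decide (v k ≠ 0)) true).trans ?_
  simp [letterCount, hammingNorm]

lemma kernelProb_mul_card_typeClass_le (d : ℕ) (v : Fin n → M) {z : ℝ} (hz0 : 0 ≤ z)
    (hz1 : z ≤ 1) :
    kernelProb d v * (#(typeClass fun s : Fin n × Fin d ↦ decide (v s.1 ≠ 0)) *
      z ^ (hammingNorm v * d)) ≤ (1 + 2 ^ d * z ^ 2) ^ n := by
  have prod_cond {X : Type} [Fintype X] (w : X → Bool) :
      ∏ s, cond (w s) z 1 = z ^ letterCount w true := by
    simp [prod_comp_eq_prod_pow_letterCount w fun b ↦ cond b z 1]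
  have bound := kernelProb_mul_le_of_rows v (fun a ↦ decide (a ≠ 0))
    (S := {ρ : Fin d → Bool | letterCount ρ true ≠ 1})
    (fun ρ hρ ↦ (mem_filter_univ _).2 (letterCount_support_ne_one hρ))
    (x := fun b ↦ cond b z 1) (by rintro (_ | _) <;> simp [hz0])
  simp only [prod_cond, letterCount_support] at bound
  have row_sum := sum_pow_letterCount_ne_one_le (κ := Fin d) hz0 hz1
  rw [Fintype.card_fin] at row_sum
  exact bound.trans (pow_le_pow_left₀ (sum_nonneg fun ρ _ ↦ by positivity) row_sum n)

lemma kernelProb_le_of_hammingNorm {d : ℕ} (hd : 0 < d) {v : Fin n → M} (hv : v ≠ 0) :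
    kernelProb d v ≤ √(hammingNorm v / n) ^ (hammingNorm v * d) *
      Real.exp (2 ^ d * hammingNorm v) := by
  set m := hammingNorm v with hm_def
  have hm : 0 < m := hammingNorm_pos_iff.2 hv
  have hmn : m ≤ n := by simpa using hammingNorm_le_card_fintype (x := v)
  have hn : (0 : ℝ) < n := mod_cast hm.trans_le hmn
  set z := √(m / n : ℝ)
  have hz0 : 0 < z := by positivity
  have hz1 : z ≤ 1 := Real.sqrt_le_one.2 ((div_le_one hn).2 (mod_cast hmn))
  have hz2 : z ^ 2 = m / n := Real.sq_sqrt (by positivity)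
  set T := #(typeClass fun s : Fin n × Fin d ↦ decide (v s.1 ≠ 0))
  have one_le : 1 ≤ T * z ^ (m * d) * z ^ (m * d) := by
    rw [hm_def, ← letterCount_support]
    refine one_le_card_typeClass_bool_mul _ ?_
    simp only [hz2, letterCount_support, Fintype.card_prod, Fintype.card_fin, Nat.cast_mul]
    exact (mul_div_mul_right _ _ (mod_cast hd.ne')).symm
  calc kernelProb d v
      ≤ kernelProb d v * (T * z ^ (m * d) * z ^ (m * d)) :=
        le_mul_of_one_le_right (kernelProb_nonneg d v) one_le
    _ = z ^ (m * d) * (kernelProb d v * (T * z ^ (m * d))) := by ring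
    _ ≤ z ^ (m * d) * (1 + 2 ^ d * z ^ 2) ^ n := by
        gcongr
        exact kernelProb_mul_card_typeClass_le d v hz0.le hz1
    _ ≤ z ^ (m * d) * Real.exp (2 ^ d * z ^ 2) ^ n := by
        gcongr
        rw [add_comm]
        exact Real.add_one_le_exp _
    _ = z ^ (m * d) * Real.exp (2 ^ d * m) := by
        rw [← Real.exp_nat_mul, hz2]
        field_simp

end Sparse

section Concentration

variable {X σ : Type*} [Fintype X] [DecidableEq X] [Fintype σ] [DecidableEq σ]

lemma sum_prod_ite_eq (u : X → σ) (y z : ℝ) :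
    ∑ v : X → σ, ∏ x, (if v x = u x then y else z) =
      (y + (Fintype.card σ - 1) * z) ^ Fintype.card X := by
  calc ∑ v : X → σ, ∏ x, (if v x = u x then y else z)
      = ∏ x, ∑ b, if b = u x then y else z :=
        (Fintype.prod_sum fun x b ↦ if b = u x then y else z).symm
    _ = ∏ _x : X, (y + (Fintype.card σ - 1) * z) := by
        refine prod_congr rfl fun x _ ↦ ?_
        have : Nonempty σ := ⟨u x⟩
        rw [← add_sum_erase _ _ (mem_univ (u x)), if_pos rfl,
          sum_congr rfl fun b hb ↦ if_neg (ne_of_mem_erase hb)]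
        simp [card_erase_of_mem, Nat.cast_pred Fintype.card_pos]
    _ = (y + (Fintype.card σ - 1) * z) ^ Fintype.card X := prod_const _

lemma sum_pow_letterCount (a : σ) (l : ℝ) :
    ∑ v : X → σ, l ^ letterCount v a = (l + (Fintype.card σ - 1)) ^ Fintype.card X := by
  simpa [letterCount, prod_ite] using sum_prod_ite_eq (fun _ : X ↦ a) l 1

lemma sum_pow_hammingDist (u : X → σ) (l : ℝ) :
    ∑ v, l ^ hammingDist v u = (1 + (Fintype.card σ - 1) * l) ^ Fintype.card X := by
  simpa [hammingDist, prod_ite] using sum_prod_ite_eq u 1 l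

lemma sum_pow_hammingDist_le_exp (u : X → σ) {l : ℝ} (hl : 0 ≤ l) :
    ∑ v, l ^ hammingDist v u ≤ Real.exp (Fintype.card X * (Fintype.card σ * l)) := by
  rw [sum_pow_hammingDist, Real.exp_nat_mul]
  rcases isEmpty_or_nonempty X with hX | ⟨⟨x⟩⟩
  · simp
  have : Nonempty σ := ⟨u x⟩
  have one_le : (1 : ℝ) ≤ Fintype.card σ := mod_cast Fintype.card_pos (α := σ)
  have := mul_nonneg (sub_nonneg.2 one_le) hl
  refine pow_le_pow_left₀ (by linarith) ?_ _
  linarith [Real.add_one_le_exp (Fintype.card σ * l)]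

lemma card_mul_le_sum {V : Type*} [Fintype V] {s : Finset V} {F : V → ℝ} {c : ℝ}
    (hF : ∀ v, 0 ≤ F v) (hs : ∀ v ∈ s, c ≤ F v) : #s * c ≤ ∑ v, F v := by
  rw [← nsmul_eq_mul]
  exact (card_nsmul_le_sum s F c hs).trans (sum_le_univ_sum_of_nonneg hF)

lemma card_hammingDist_eq_mul_pow_le (u : X → σ) (m : ℕ) {l : ℝ} (hl : 0 ≤ l) :
    #{v | hammingDist v u = m} * l ^ m ≤ Real.exp (Fintype.card X * (Fintype.card σ * l)) :=
  (card_mul_le_sum (fun _ ↦ by positivity) fun v hv ↦ by rw [(mem_filter_univ v).1 hv]).trans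
    (sum_pow_hammingDist_le_exp u hl)

lemma card_hammingDist_le_le_exp (u : X → σ) {δ : ℝ} (hδ0 : 0 < δ) (hδ1 : δ < 1) :
    (#{v | (hammingDist v u : ℝ) ≤ δ * Fintype.card X} : ℝ) ≤
      Real.exp (Fintype.card X * (δ * Real.log (1 / δ) + Fintype.card σ * δ)) := by
  have weight_le : ∀ v ∈ ({v | (hammingDist v u : ℝ) ≤ δ * Fintype.card X} : Finset (X → σ)),
      Real.exp (-(Fintype.card X * (δ * Real.log (1 / δ)))) ≤ δ ^ hammingDist v u := by
    intro v hv
    rw [mem_filter_univ] at hv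
    rw [one_div, Real.log_inv, ← Real.exp_log (pow_pos hδ0 (hammingDist v u)), Real.log_pow,
      Real.exp_le_exp]
    linarith [mul_le_mul_of_nonpos_right hv (Real.log_neg hδ0 hδ1).le]
  have markov := (card_mul_le_sum (fun _ ↦ by positivity) weight_le).trans
    (sum_pow_hammingDist_le_exp u hδ0.le)
  rw [Real.exp_neg, ← div_eq_mul_inv, div_le_iff₀ (Real.exp_pos _), ← Real.exp_add] at markov
  exact markov.trans_eq (by ring_nf)

lemma card_letterFreq_deviation_le [Nonempty X] (a : σ) {l : ℝ} (hl : |l| ≤ 1) (s : ℝ) :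
    (#{v : X → σ | s ≤ l * (letterFreq v a - (Fintype.card σ : ℝ)⁻¹)} : ℝ) ≤
      Fintype.card σ ^ Fintype.card X * Real.exp (Fintype.card X * (l ^ 2 - s)) := by
  have : Nonempty σ := ⟨a⟩
  set n := Fintype.card X
  have hn : (0 : ℝ) < n := mod_cast Fintype.card_pos
  set q := (Fintype.card σ : ℝ)
  have hq : 1 ≤ q := Nat.one_le_cast.2 (Fintype.card_pos (α := σ))
  have : 0 < q := by linarith
  have moment : ∑ v : X → σ, Real.exp l ^ letterCount v a ≤
      q ^ n * Real.exp (n * (q⁻¹ * l + l ^ 2)) := by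
    rw [sum_pow_letterCount, Real.exp_nat_mul, ← mul_pow]
    refine pow_le_pow_left₀ (by linarith [Real.exp_pos l]) ?_ n
    have exp_sub_one : Real.exp l - 1 ≤ l + l ^ 2 := by
      linarith [(abs_le.1 (Real.abs_exp_sub_one_sub_id_le hl)).2]
    calc Real.exp l + (q - 1) ≤ q + l + 1 * l ^ 2 := by linarith
      _ ≤ q + l + q * l ^ 2 := by gcongr
      _ = q * (q⁻¹ * l + l ^ 2 + 1) := by field_simp; ring
      _ ≤ q * Real.exp (q⁻¹ * l + l ^ 2) := by gcongr; exact Real.add_one_le_exp _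
  have weight_le : ∀ v ∈ ({v | s ≤ l * (letterFreq v a - q⁻¹)} : Finset (X → σ)),
      Real.exp (n * (s + q⁻¹ * l)) ≤ Real.exp l ^ letterCount v a := by
    intro v hv
    rw [mem_filter_univ] at hv
    have count_eq : (letterCount v a : ℝ) = n * letterFreq v a :=
      (mul_div_cancel₀ _ hn.ne').symm
    rw [← Real.exp_nat_mul, Real.exp_le_exp, count_eq, mul_assoc]
    gcongr
    linarith
  have markov := (card_mul_le_sum (fun _ ↦ by positivity) weight_le).trans moment
  rw [← le_div_iff₀ (Real.exp_pos _), mul_div_assoc, ← Real.exp_sub] at markov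
  exact markov.trans_eq (by ring_nf)

/-- The words in which every letter has frequency within `t` of the uniform one. -/
noncomputable def nearUniform (X σ : Type*) [Fintype X] [DecidableEq X] [Fintype σ]
    [DecidableEq σ] (t : ℝ) : Finset (X → σ) :=
  {v | ∀ a, |letterFreq v a - (Fintype.card σ : ℝ)⁻¹| ≤ t}

lemma mem_nearUniform {t : ℝ} {v : X → σ} :
    v ∈ nearUniform X σ t ↔ ∀ a, |letterFreq v a - (Fintype.card σ : ℝ)⁻¹| ≤ t :=
  mem_filter_univ v

lemma card_compl_nearUniform_le [Nonempty X] {t : ℝ} (ht0 : 0 < t) (ht1 : t ≤ 1) :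
    (#(nearUniform X σ t)ᶜ : ℝ) ≤ 2 * Fintype.card σ *
      (Fintype.card σ ^ Fintype.card X * Real.exp (Fintype.card X * -(t ^ 2 / 4))) := by
  set tail : σ → ℝ → Finset (X → σ) := fun a l ↦
    {v | t ^ 2 / 2 ≤ l * (letterFreq v a - (Fintype.card σ : ℝ)⁻¹)} with tail_def
  have card_tail (a : σ) {l : ℝ} (hl : |l| = t / 2) : (#(tail a l) : ℝ) ≤
      Fintype.card σ ^ Fintype.card X * Real.exp (Fintype.card X * -(t ^ 2 / 4)) := by
    refine (card_letterFreq_deviation_le a (by linarith) _).trans_eq ?_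
    rw [← sq_abs, hl]
    ring_nf
  have subset_tails : (nearUniform X σ t)ᶜ ⊆
      univ.biUnion fun a ↦ tail a (t / 2) ∪ tail a (-(t / 2)) := by
    intro v hv
    obtain ⟨a, ha⟩ : ∃ a, t < |letterFreq v a - (Fintype.card σ : ℝ)⁻¹| := by
      simpa [mem_nearUniform] using hv
    simp only [tail_def, mem_biUnion, mem_univ, true_and, mem_union, mem_filter]
    exact ⟨a, (lt_abs.1 ha).imp (fun h ↦ by nlinarith) fun h ↦ by nlinarith⟩
  have halves : |t / 2| = t / 2 := abs_of_pos (by positivity)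
  calc (#(nearUniform X σ t)ᶜ : ℝ)
      ≤ ∑ a, ((#(tail a (t / 2)) : ℝ) + #(tail a (-(t / 2)))) := mod_cast
        (card_le_card subset_tails).trans
          (card_biUnion_le.trans (sum_le_sum fun a _ ↦ card_union_le _ _))
    _ ≤ ∑ _a : σ, 2 * (Fintype.card σ ^ Fintype.card X *
          Real.exp (Fintype.card X * -(t ^ 2 / 4))) := by
        refine sum_le_sum fun a _ ↦ ?_
        linarith [card_tail a halves, card_tail a ((abs_neg (t / 2)).trans halves)]
    _ = _ := by
        rw [sum_const, card_univ, nsmul_eq_mul]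
        ring

/-- The words within Hamming distance `δ|X|` of some constant word. -/
noncomputable def nearConst (X σ : Type*) [Fintype X] [DecidableEq X] [Fintype σ]
    [DecidableEq σ] (δ : ℝ) : Finset (X → σ) :=
  univ.biUnion fun a ↦ {v | (hammingDist v fun _ ↦ a : ℝ) ≤ δ * Fintype.card X}

lemma mem_nearConst {δ : ℝ} {v : X → σ} :
    v ∈ nearConst X σ δ ↔ ∃ a, (hammingDist v fun _ ↦ a : ℝ) ≤ δ * Fintype.card X := by
  simp [nearConst]

lemma typeProb_le_of_notMem_nearConst {δ : ℝ} {w : X → σ} (hw : w ∉ nearConst X σ δ) :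
    typeProb w ≤ (1 - δ) ^ Fintype.card X := by
  rw [mem_nearConst, not_exists] at hw
  rw [← card_univ, ← prod_const]
  refine prod_le_prod (fun x _ ↦ letterFreq_nonneg w _) fun x _ ↦ ?_
  have count_add : (letterCount w (w x) : ℝ) + hammingDist w (fun _ ↦ w x) = Fintype.card X :=
    mod_cast letterCount_add_hammingDist w (w x)
  rw [letterFreq, div_le_iff₀ (mod_cast Fintype.card_pos_iff.2 ⟨x⟩)]
  linarith [not_le.1 (hw (w x))]

lemma sum_nearConst_le {δ B : ℝ} {F : (X → σ) → ℝ} (hF : ∀ v, 0 ≤ F v)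
    (hB : ∀ a, ∑ v with (hammingDist v fun _ ↦ a : ℝ) ≤ δ * Fintype.card X, F v ≤ B) :
    ∑ v ∈ nearConst X σ δ, F v ≤ Fintype.card σ * B := by
  have subadditive {s t : Finset (X → σ)} :
      ∑ v ∈ s ∪ t, F v ≤ ∑ v ∈ s, F v + ∑ v ∈ t, F v := by
    rw [← sum_union_inter]
    exact le_add_of_nonneg_right (sum_nonneg fun v _ ↦ hF v)
  calc ∑ v ∈ nearConst X σ δ, F v
      ≤ ∑ a, ∑ v with (hammingDist v fun _ ↦ a : ℝ) ≤ δ * Fintype.card X, F v := by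
        rw [nearConst, ← sup_eq_biUnion]
        exact apply_sup_le_sum (f := fun s ↦ ∑ v ∈ s, F v) sum_empty subadditive _
    _ ≤ ∑ _a : σ, B := sum_le_sum fun a _ ↦ hB a
    _ = Fintype.card σ * B := by simp

end Concentration

section SparseSum

variable {n d : ℕ} {M : Type*} [AddCommMonoid M] [Fintype M] [DecidableEq M]

lemma sum_kernelProb_hammingNorm_eq_le (hd : 3 ≤ d) {m : ℕ} (hm : 0 < m) (hmn : m ≤ n) :
    ∑ v : Fin n → M with hammingNorm v = m, kernelProb d v ≤
      (Real.exp (Fintype.card M + 2 ^ d) * √(m / n)) ^ m := by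
  have hn : 0 < n := hm.trans_le hmn
  set z := √(m / n : ℝ)
  have hz0 : 0 < z := by positivity
  have hz1 : z ≤ 1 := Real.sqrt_le_one.2 ((div_le_one (by positivity)).2 (mod_cast hmn))
  have hz2 : z ^ 2 = m / n := Real.sq_sqrt (by positivity)
  have kernelProb_le (v : Fin n → M) (hv : hammingNorm v = m) :
      kernelProb d v ≤ (z ^ 2) ^ m * (Real.exp (2 ^ d) * z) ^ m := by
    have hv0 : v ≠ 0 := hammingNorm_pos_iff.1 (hv ▸ hm)
    calc kernelProb d v ≤ z ^ (m * d) * Real.exp (2 ^ d * m) := by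
          simpa only [hv] using kernelProb_le_of_hammingNorm (three_pos.trans_le hd) hv0
      _ ≤ z ^ (m * 3) * Real.exp (2 ^ d * m) := by
          gcongr ?_ * _
          exact pow_le_pow_of_le_one hz0.le hz1 (Nat.mul_le_mul_left m hd)
      _ = (z ^ 2) ^ m * (Real.exp (2 ^ d) * z) ^ m := by
          rw [mul_comm (2 ^ d : ℝ), Real.exp_nat_mul]
          ring
  have card_le : #{v : Fin n → M | hammingNorm v = m} * (z ^ 2) ^ m ≤
      Real.exp (Fintype.card M) ^ m := by
    have := card_hammingDist_eq_mul_pow_le (0 : Fin n → M) m (sq_nonneg z)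
    simp only [hammingDist_zero_right, Fintype.card_fin] at this
    rwa [hz2, ← mul_div_assoc, mul_div_cancel₀ _ (by positivity), ← hz2, mul_comm _ (m : ℝ),
      Real.exp_nat_mul] at this
  calc ∑ v : Fin n → M with hammingNorm v = m, kernelProb d v
      ≤ #{v : Fin n → M | hammingNorm v = m} * ((z ^ 2) ^ m * (Real.exp (2 ^ d) * z) ^ m) := by
        rw [← nsmul_eq_mul]
        exact sum_le_card_nsmul _ _ _ fun v hv ↦ kernelProb_le v ((mem_filter_univ v).1 hv)
    _ ≤ Real.exp (Fintype.card M) ^ m * (Real.exp (2 ^ d) * z) ^ m := by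
        rw [← mul_assoc]
        gcongr
    _ = (Real.exp (Fintype.card M + 2 ^ d) * z) ^ m := by
        rw [Real.exp_add]
        ring

lemma mul_sqrt_pow_le {C δ : ℝ} {m : ℕ} (hC : 0 ≤ C) (hδ : C * √δ ≤ 1 / 4) (hn : 0 < n)
    (hm : 0 < m) (hmn : m ≤ δ * n) : (C * √(m / n)) ^ m ≤ 4 * C / √n * (1 / 2) ^ m := by
  obtain ⟨j, rfl⟩ := Nat.exists_eq_succ_of_ne_zero hm.ne'
  have small : C * √(j.succ / n) ≤ 1 / 4 := by
    refine le_trans ?_ hδ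
    gcongr
    rwa [div_le_iff₀ (by positivity)]
  have two_pow : √(j.succ : ℝ) ≤ 2 ^ j.succ :=
    (Real.sqrt_le_self_iff.2 (.inr (by simp))).trans (mod_cast Nat.lt_two_pow_self.le)
  calc (C * √(j.succ / n)) ^ j.succ = (C * √(j.succ / n)) ^ j * (C * √j.succ / √n) := by
        rw [pow_succ, Real.sqrt_div (by positivity), mul_div_assoc]
    _ ≤ (1 / 4) ^ j * (C * 2 ^ j.succ / √n) := by gcongr
    _ = 4 * C / √n * ((1 / 4) ^ j.succ * 2 ^ j.succ) := by
        rw [pow_succ (1 / 4 : ℝ)]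
        ring
    _ = 4 * C / √n * (1 / 2) ^ j.succ := by
        rw [← mul_pow]
        norm_num

lemma sum_kernelProb_sparse_le (hd : 3 ≤ d) (hn : 0 < n) {δ : ℝ}
    (hδ : Real.exp (Fintype.card M + 2 ^ d) * √δ ≤ 1 / 4) :
    ∑ v : Fin n → M with v ≠ 0 ∧ hammingNorm v ≤ δ * n, kernelProb d v ≤
      8 * Real.exp (Fintype.card M + 2 ^ d) / √n := by
  set C := Real.exp (Fintype.card M + 2 ^ d)
  have level_le : ∀ m ∈ range (n + 1), ∑ v : Fin n → M with
      (v ≠ 0 ∧ hammingNorm v ≤ δ * n) ∧ hammingNorm v = m, kernelProb d v ≤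
        4 * C / √n * (1 / 2) ^ m := by
    intro m hm
    by_cases hmem : 0 < m ∧ m ≤ δ * n
    · refine le_trans ?_ (((sum_kernelProb_hammingNorm_eq_le hd hmem.1
        (Nat.lt_succ_iff.1 (mem_range.1 hm))).trans
          (mul_sqrt_pow_le (Real.exp_pos _).le hδ hn hmem.1 hmem.2)))
      exact sum_le_sum_of_subset_of_nonneg (monotone_filter_right _ fun v _ hv ↦ hv.2)
        fun v _ _ ↦ kernelProb_nonneg d v
    · rw [filter_false_of_mem, sum_empty]
      · positivity
      · rintro v - ⟨⟨hv0, hv⟩, rfl⟩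
        exact hmem ⟨hammingNorm_pos_iff.2 hv0, hv⟩
  calc ∑ v : Fin n → M with v ≠ 0 ∧ hammingNorm v ≤ δ * n, kernelProb d v
      = ∑ m ∈ range (n + 1), ∑ v : Fin n → M with
          (v ≠ 0 ∧ hammingNorm v ≤ δ * n) ∧ hammingNorm v = m, kernelProb d v := by
        simp only [← filter_filter (fun v : Fin n → M ↦ v ≠ 0 ∧ (hammingNorm v : ℝ) ≤ δ * n)]
        exact (sum_fiberwise_of_maps_to (fun v _ ↦ mem_range.2 (Nat.lt_succ_iff.2 (by
          simpa using hammingNorm_le_card_fintype (x := v)))) _).symm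
    _ ≤ ∑ m ∈ range (n + 1), 4 * C / √n * (1 / 2) ^ m := sum_le_sum level_le
    _ ≤ 4 * C / √n * 2 := by
        rw [← mul_sum]
        gcongr
        exact sum_geometric_two_le _
    _ = 8 * C / √n := by ring

end SparseSum

section RowWeight

lemma pow_prod_card_sub_one_eq {κ R : Type*} [Fintype κ] [DecidableEq κ] [CommMonoid R]
    (t : κ → R) : (∏ i, t i) ^ (Fintype.card κ - 1) = ∏ i, ∏ j ∈ {i}ᶜ, t j := by
  rw [prod_comm' (t' := univ) (s' := fun j ↦ ({j}ᶜ : Finset κ)) fun i j ↦ by simp [eq_comm]]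
  simp [card_compl, prod_pow]

lemma prod_pow_sub_one_eq_prod_rpow {d : ℕ} (hd : d ≠ 0) {t : Fin d → ℝ} (ht : ∀ i, 0 ≤ t i) :
    ∏ i, t i ^ (d - 1) = ∏ i, (∏ j ∈ {i}ᶜ, t j ^ d) ^ (d : ℝ)⁻¹ := by
  simp only [prod_pow, Real.pow_rpow_inv_natCast (prod_nonneg fun j _ ↦ ht j) hd]
  simpa only [Fintype.card_fin] using pow_prod_card_sub_one_eq t

lemma prod_pow_sub_one_le {d : ℕ} (hd : d ≠ 0) {t : Fin d → ℝ} (ht : ∀ i, 0 ≤ t i) :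
    ∏ i, t i ^ (d - 1) ≤ ∑ i, (d : ℝ)⁻¹ * ∏ j ∈ {i}ᶜ, t j ^ d := by
  rw [prod_pow_sub_one_eq_prod_rpow hd ht]
  exact Real.geom_mean_le_arith_mean_weighted _ _ _ (fun _ _ ↦ by positivity) (by simp [hd])
    fun i _ ↦ prod_nonneg fun j _ ↦ pow_nonneg (ht j) d

lemma prod_compl_eq_of_prod_pow_sub_one_eq {d : ℕ} (hd : d ≠ 0) {t : Fin d → ℝ}
    (ht : ∀ i, 0 ≤ t i)
    (h : ∏ i, t i ^ (d - 1) = ∑ i, (d : ℝ)⁻¹ * ∏ j ∈ {i}ᶜ, t j ^ d) (i i' : Fin d) :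
    ∏ j ∈ {i}ᶜ, t j ^ d = ∏ j ∈ {i'}ᶜ, t j ^ d := by
  rw [prod_pow_sub_one_eq_prod_rpow hd ht,
    Real.geom_mean_eq_arith_mean_weighted_iff_of_pos _ _ _ (fun _ _ ↦ by positivity)
      (by simp [hd]) fun i _ ↦ prod_nonneg fun j _ ↦ pow_nonneg (ht j) d] at h
  exact h i (mem_univ i) i' (mem_univ i')

section Monoid

variable {M : Type*} [AddCommMonoid M] [Fintype M] [DecidableEq M] {d : ℕ} {y : M → ℝ}

/-- The total weight of the rows of length `d` with sum zero, an entry `a` being weighted by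
`y a ^ (d - 1)`. For a probability vector `α` it is used with `y = α ^ (1 / d)`: then
`rowWeight d y ^ n` times the type probability bounds the chance that a vector with letter
frequencies `α` lies in the kernel. -/
def rowWeight (d : ℕ) (y : M → ℝ) : ℝ :=
  ∑ ρ : Fin d → M with ∑ i, ρ i = 0, ∏ i, y (ρ i) ^ (d - 1)

lemma rowWeight_nonneg (hy : ∀ a, 0 ≤ y a) : 0 ≤ rowWeight d y :=
  sum_nonneg fun _ _ ↦ prod_nonneg fun _ _ ↦ pow_nonneg (hy _) _

lemma continuous_rowWeight : Continuous (rowWeight d : (M → ℝ) → ℝ) := by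
  unfold rowWeight
  fun_prop

end Monoid

section Group

variable {M : Type*} [AddCommGroup M] [Fintype M] [DecidableEq M] {d : ℕ} {y : M → ℝ}

lemma sum_zero_sum_prod_compl (i : Fin d) (b : M → ℝ) :
    ∑ ρ : Fin d → M with ∑ i, ρ i = 0, ∏ j ∈ {i}ᶜ, b (ρ j) = (∑ a, b a) ^ (d - 1) := by
  obtain ⟨e, rfl⟩ := Nat.exists_eq_succ_of_ne_zero i.pos.ne'
  have prod_insertNth (x : M) (τ : Fin e → M) :
      ∏ j ∈ {i}ᶜ, b (i.insertNth (α := fun _ ↦ M) x τ j) = ∏ j, b (τ j) := by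
    rw [← Fin.image_succAbove_univ, prod_image Fin.succAbove_right_injective.injOn]
    simp
  rw [sum_filter, ← (Fin.insertNthEquiv (fun _ ↦ M) i).sum_comp, Fintype.sum_prod_type_right]
  simp only [Fin.insertNthEquiv_apply, Fin.sum_univ_succAbove _ i, Fin.insertNth_apply_same,
    Fin.insertNth_apply_succAbove, prod_insertNth, add_eq_zero_iff_eq_neg, sum_ite_eq', mem_univ,
    if_true, Nat.succ_sub_one, Fintype.sum_pow]

lemma sum_zero_sum_arith_mean (hd : d ≠ 0) (hs : ∑ a, y a ^ d = 1) :
    ∑ ρ : Fin d → M with ∑ i, ρ i = 0, ∑ i, (d : ℝ)⁻¹ * ∏ j ∈ {i}ᶜ, y (ρ j) ^ d = 1 := by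
  rw [sum_comm]
  simp only [← mul_sum, sum_zero_sum_prod_compl _ fun a ↦ y a ^ d, hs]
  simp [hd]

lemma rowWeight_le_one (hd : d ≠ 0) (hy : ∀ a, 0 ≤ y a) (hs : ∑ a, y a ^ d = 1) :
    rowWeight d y ≤ 1 := by
  rw [← sum_zero_sum_arith_mean hd hs]
  exact sum_le_sum fun ρ _ ↦ prod_pow_sub_one_le hd fun i ↦ hy _

lemma prod_compl_eq_of_rowWeight_eq_one (hd : d ≠ 0) (hy : ∀ a, 0 ≤ y a)
    (hs : ∑ a, y a ^ d = 1) (h : rowWeight d y = 1) {ρ : Fin d → M} (hρ : ∑ i, ρ i = 0)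
    (i i' : Fin d) : ∏ j ∈ {i}ᶜ, y (ρ j) ^ d = ∏ j ∈ {i'}ᶜ, y (ρ j) ^ d := by
  rw [← sum_zero_sum_arith_mean hd hs, rowWeight,
    sum_eq_sum_iff_of_le fun ρ _ ↦ prod_pow_sub_one_le hd fun i ↦ hy _] at h
  exact prod_compl_eq_of_prod_pow_sub_one_eq hd (fun i ↦ hy _)
    (h ρ ((mem_filter_univ ρ).2 hρ)) i i'

lemma apply_eq_of_rowWeight_eq_one (hd : 2 ≤ d) (hy : ∀ a, 0 ≤ y a) (hs : ∑ a, y a ^ d = 1)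
    (h : rowWeight d y = 1) {ρ : Fin d → M} (hρ : ∑ i, ρ i = 0) {i₀ : Fin d}
    (hne : ∀ j ≠ i₀, y (ρ j) ≠ 0) (i i' : Fin d) : y (ρ i) = y (ρ i') := by
  have hd0 : d ≠ 0 := by lia
  have balanced := prod_compl_eq_of_rowWeight_eq_one hd0 hy hs h hρ
  have prod_ne_zero (i : Fin d) : ∏ j ∈ {i}ᶜ, y (ρ j) ^ d ≠ 0 := by
    rw [balanced i i₀, prod_ne_zero_iff]
    exact fun j hj ↦ pow_ne_zero d (hne j (by simpa using hj))
  have full_prod (i : Fin d) :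
      y (ρ i) ^ d * ∏ j ∈ {i}ᶜ, y (ρ j) ^ d = ∏ j, y (ρ j) ^ d :=
    (Fintype.prod_eq_mul_prod_compl i fun j ↦ y (ρ j) ^ d).symm
  refine (pow_left_inj₀ (hy _) (hy _) hd0).1 (mul_right_cancel₀ (prod_ne_zero i') ?_)
  rw [full_prod i', ← balanced i i', full_prod i]

lemma apply_neg_eq_of_rowWeight_eq_one {e : ℕ} (hy : ∀ a, 0 ≤ y a)
    (hs : ∑ a, y a ^ (e + 3) = 1) (h : rowWeight (e + 3) y = 1) {a b c : M} (ha : y a ≠ 0)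
    (hb : y b ≠ 0) (hc : y c ≠ 0) : y (-(b + c + e • a)) = y b ∧ y c = y b := by
  have equal := apply_eq_of_rowWeight_eq_one (by lia) hy hs h (i₀ := 0)
    (ρ := Fin.cons (-(b + c + e • a)) (Fin.cons b (Fin.cons c fun _ ↦ a)))
    (by simp [Fin.sum_cons, add_assoc]) (by
      intro j hj
      obtain ⟨j, rfl⟩ := Fin.exists_succ_eq.2 hj
      refine j.cases hb fun j ↦ j.cases hc fun _ ↦ ha)
  exact ⟨equal 0 1, equal 2 1⟩

end Group

lemma isCompact_pow_sum_eq_one_inter {σ : Type*} [Fintype σ] {d : ℕ} (hd : d ≠ 0)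
    (a₀ : σ) (b c t : ℝ) :
    IsCompact {y : σ → ℝ | ((∀ a, 0 ≤ y a) ∧ ∑ a, y a ^ d = 1) ∧
      y a₀ ^ d ≤ b ∧ ∃ a, t ≤ |y a ^ d - c|} := by
  refine (isCompact_Icc (a := (0 : σ → ℝ)) (b := 1)).of_isClosed_subset ?_ ?_
  · simp only [Set.ofPred_and, Set.ofPred_forall, Set.ofPred_exists]
    refine ((isClosed_iInter fun a ↦ ?_).inter ?_).inter
      (IsClosed.inter ?_ (isClosed_iUnion_of_finite fun a ↦ ?_))
    · exact isClosed_le continuous_const (by fun_prop)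
    · exact isClosed_eq (by fun_prop) continuous_const
    · exact isClosed_le (by fun_prop) continuous_const
    · exact isClosed_le continuous_const (by fun_prop)
  · rintro y ⟨⟨hy, hs⟩, -⟩
    refine ⟨hy, fun a ↦ (pow_le_one_iff_of_nonneg (hy a) hd).1 (hs ▸ ?_)⟩
    exact single_le_sum (f := fun a ↦ y a ^ d) (fun i _ ↦ pow_nonneg (hy i) d) (mem_univ a)

section ZMod

variable {p d : ℕ} [Fact p.Prime] {y : ZMod p → ℝ}

lemma eq_of_rowWeight_eq_one (hd : 3 ≤ d) (hy : ∀ a, 0 ≤ y a) (hs : ∑ a, y a ^ d = 1)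
    (h : rowWeight d y = 1) {a b : ZMod p} (hab : a ≠ b) (ha : y a ≠ 0) (hb : y b ≠ 0)
    (c : ZMod p) : y c = y a := by
  obtain ⟨e, rfl⟩ := Nat.exists_eq_add_of_le' hd
  have translate {c : ZMod p} (hc : y c ≠ 0) : y (c + (a - b)) ≠ 0 := by
    have hneg : y (-(a + c + e • a)) ≠ 0 :=
      (apply_neg_eq_of_rowWeight_eq_one hy hs h ha ha hc).1 ▸ ha
    convert (apply_neg_eq_of_rowWeight_eq_one hy hs h ha hb hneg).1 ▸ hb using 2
    ring
  have translates (k : ℕ) : y (a + k * (a - b)) ≠ 0 := by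
    induction k with
    | zero => simpa using ha
    | succ k ih =>
      convert translate ih using 2
      push_cast
      ring
  have hc := translates ((c - a) / (a - b)).val
  rw [ZMod.natCast_zmod_val, div_mul_cancel₀ _ (sub_ne_zero.2 hab), add_sub_cancel] at hc
  exact (apply_neg_eq_of_rowWeight_eq_one hy hs h ha ha hc).2

lemma eq_zero_of_nsmul_eq_zero (hgcd : p.gcd d = 1) {a : ZMod p} (ha : d • a = 0) : a = 0 := by
  rw [nsmul_eq_mul, mul_eq_zero, ZMod.natCast_eq_zero_iff] at ha
  exact ha.resolve_left fun h ↦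
    (Fact.out : p.Prime).ne_one ((Nat.gcd_eq_left h).symm.trans hgcd)

lemma eq_zero_of_rowWeight_eq_one (hd : 2 ≤ d) (hgcd : p.gcd d = 1) (h : rowWeight d y = 1)
    {a : ZMod p} (hsupp : ∀ c ≠ a, y c = 0) : a = 0 := by
  by_contra ha
  refine zero_ne_one ((sum_eq_zero fun ρ hρ ↦ ?_).symm.trans h)
  rw [mem_filter_univ] at hρ
  obtain ⟨i, hi⟩ : ∃ i, ρ i ≠ a := by
    by_contra! hconst
    exact ha (eq_zero_of_nsmul_eq_zero hgcd (by simpa [hconst] using hρ))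
  exact prod_eq_zero (mem_univ i) (by rw [hsupp _ hi, zero_pow (by lia)])

lemma pow_eq_one_or_uniform_of_rowWeight_eq_one (hd : 3 ≤ d) (hgcd : p.gcd d = 1)
    (hy : ∀ a, 0 ≤ y a) (hs : ∑ a, y a ^ d = 1) (h : rowWeight d y = 1) :
    y 0 ^ d = 1 ∨ ∀ a, y a ^ d = (p : ℝ)⁻¹ := by
  have hd0 : d ≠ 0 := by lia
  obtain ⟨a, -, ha⟩ := exists_ne_zero_of_sum_ne_zero (hs.trans_ne one_ne_zero)
  rw [pow_ne_zero_iff hd0] at ha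
  by_cases hsupp : ∃ b, a ≠ b ∧ y b ≠ 0
  · obtain ⟨b, hab, hb⟩ := hsupp
    have hconst := eq_of_rowWeight_eq_one hd hy hs h hab ha hb
    refine Or.inr fun c ↦ eq_inv_of_mul_eq_one_right ?_
    simpa [hconst] using hs
  · have hsupp : ∀ c ≠ a, y c = 0 := fun c hc ↦ by_contra fun hyc ↦ hsupp ⟨c, hc.symm, hyc⟩
    refine Or.inl ?_
    rw [← eq_zero_of_rowWeight_eq_one (by lia) hgcd h hsupp, ← hs]
    exact (Fintype.sum_eq_single (f := fun c ↦ y c ^ d) a fun c hc ↦ by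
      rw [hsupp c hc, zero_pow hd0]).symm

lemma exists_rowWeight_le (hd : 3 ≤ d) (hgcd : p.gcd d = 1) {δ t : ℝ} (hδ : 0 < δ)
    (ht : 0 < t) :
    ∃ r : ℝ, 0 ≤ r ∧ r < 1 ∧ ∀ y : ZMod p → ℝ, (∀ a, 0 ≤ y a) → ∑ a, y a ^ d = 1 →
      y 0 ^ d ≤ 1 - δ → (∃ a, t ≤ |y a ^ d - (p : ℝ)⁻¹|) → rowWeight d y ≤ r := by
  have compact := isCompact_pow_sum_eq_one_inter (show d ≠ 0 by lia) (0 : ZMod p) (1 - δ)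
    (p : ℝ)⁻¹ t
  rcases Set.eq_empty_or_nonempty {y : ZMod p → ℝ | ((∀ a, 0 ≤ y a) ∧ ∑ a, y a ^ d = 1) ∧
      y 0 ^ d ≤ 1 - δ ∧ ∃ a, t ≤ |y a ^ d - (p : ℝ)⁻¹|} with empty | nonempty
  · refine ⟨0, le_rfl, one_pos, fun y hy hs h0 hdev ↦ ?_⟩
    exact (Set.eq_empty_iff_forall_notMem.1 empty y ⟨⟨hy, hs⟩, h0, hdev⟩).elim
  · obtain ⟨z, ⟨⟨hz, hzs⟩, hz0, a, ha⟩, hmax⟩ :=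
      compact.exists_isMaxOn nonempty continuous_rowWeight.continuousOn
    refine ⟨rowWeight d z, rowWeight_nonneg hz, ?_, fun y hy hs h0 hdev ↦
      hmax ⟨⟨hy, hs⟩, h0, hdev⟩⟩
    refine (rowWeight_le_one (by lia) hz hzs).lt_of_ne fun h ↦ ?_
    rcases pow_eq_one_or_uniform_of_rowWeight_eq_one hd hgcd hz hzs h with h1 | hunif
    · linarith
    · rw [hunif a, sub_self, abs_zero] at ha
      linarith

end ZMod

section Intermediate

lemma kernelProb_le_rowWeight {M : Type*} [AddCommMonoid M] [Fintype M] [DecidableEq M] {n d : ℕ}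
    (hd : 0 < d) (v : Fin n → M) {y : M → ℝ} (hy : ∀ a, 0 ≤ y a)
    (hyv : ∀ a, y a ^ d = letterFreq v a) :
    kernelProb d v ≤
      (n * d + 1) ^ Fintype.card M * rowWeight d y ^ n * typeProb v := by
  have : Nonempty (Fin d) := ⟨⟨0, hd⟩⟩
  have rows := kernelProb_mul_le_of_rows (d := d) v id
    (S := {ρ | ∑ i, ρ i = 0}) (fun ρ hρ ↦ (mem_filter_univ _).2 hρ)
    (x := fun a ↦ y a ^ (d - 1)) fun a ↦ pow_nonneg (hy a) _
  have prod_eq : ∏ s : Fin n × Fin d, y (v s.1) ^ (d - 1) = typeProb v ^ (d - 1) := by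
    simp [typeProb, ← hyv, Fintype.prod_prod_type, prod_pow, ← pow_mul]
  have one_le := one_le_card_typeClass_mul_typeProb fun s : Fin n × Fin d ↦ v s.1
  rw [show typeProb (fun s : Fin n × Fin d ↦ v s.1) = _ from typeProb_comp_fst v] at one_le
  simp only [Fintype.card_prod, Fintype.card_fin, id, prod_eq] at rows one_le
  set T := #(typeClass fun s : Fin n × Fin d ↦ v s.1)
  calc kernelProb d v
      ≤ kernelProb d v * (((n * d : ℕ) + 1) ^ Fintype.card M * (T * typeProb v ^ d)) :=
        le_mul_of_one_le_right (kernelProb_nonneg d v) one_le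
    _ = (n * d + 1) ^ Fintype.card M * (kernelProb d v * (T * typeProb v ^ (d - 1))) *
          typeProb v := by
        rw [← Nat.sub_add_cancel hd, pow_succ, Nat.add_sub_cancel]
        push_cast
        ring
    _ ≤ (n * d + 1) ^ Fintype.card M * rowWeight d y ^ n * typeProb v := by
        gcongr
        · exact typeProb_nonneg v
        · exact rows

lemma exists_sum_kernelProb_intermediate_le {p d : ℕ} [Fact p.Prime] (hd : 3 ≤ d)
    (hgcd : p.gcd d = 1) {δ t : ℝ} (hδ : 0 < δ) (ht : 0 < t) :
    ∃ r : ℝ, 0 ≤ r ∧ r < 1 ∧ ∀ n : ℕ, 0 < n →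
      ∑ v : Fin n → ZMod p with ¬ hammingNorm v ≤ δ * n ∧ v ∉ nearUniform (Fin n) (ZMod p) t,
        kernelProb d v ≤ (n + 1) ^ p * ((n * d + 1) ^ p * r ^ n) := by
  obtain ⟨r, hr0, hr1, hr⟩ := exists_rowWeight_le hd hgcd hδ ht
  refine ⟨r, hr0, hr1, fun n hn ↦ ?_⟩
  have : Nonempty (Fin n) := ⟨⟨0, hn⟩⟩
  have kernelProb_le : ∀ v ∈ ({v | ¬ hammingNorm v ≤ δ * n ∧
      v ∉ nearUniform (Fin n) (ZMod p) t} : Finset (Fin n → ZMod p)),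
      kernelProb d v ≤ (n * d + 1) ^ p * r ^ n * typeProb v := by
    intro v hv
    obtain ⟨hsparse, hunif⟩ := (mem_filter_univ v).1 hv
    set y : ZMod p → ℝ := fun a ↦ letterFreq v a ^ (d : ℝ)⁻¹
    have hy (a) : 0 ≤ y a := Real.rpow_nonneg (letterFreq_nonneg v a) _
    have hyv (a) : y a ^ d = letterFreq v a :=
      Real.rpow_inv_natCast_pow (letterFreq_nonneg v a) (by lia)
    refine (kernelProb_le_rowWeight (by lia) v hy hyv).trans ?_
    rw [ZMod.card]
    gcongr
    · exact typeProb_nonneg v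
    · exact rowWeight_nonneg hy
    · refine hr y hy (by simpa [hyv] using sum_letterFreq v) ?_ ?_
      · have count_zero : (letterCount v 0 + hammingNorm v : ℝ) = n :=
          mod_cast (letterCount_add_hammingDist v 0).trans (Fintype.card_fin n)
        rw [hyv, letterFreq, Fintype.card_fin, div_le_iff₀ (by positivity)]
        linarith
      · obtain ⟨a, ha⟩ : ∃ a, t < |letterFreq v a - (p : ℝ)⁻¹| := by
          simpa [mem_nearUniform] using hunif
        exact ⟨a, by rw [hyv]; exact ha.le⟩
  calc _ ≤ ∑ v : Fin n → ZMod p, (n * d + 1) ^ p * r ^ n * typeProb v :=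
        (sum_le_sum kernelProb_le).trans (sum_le_univ_sum_of_nonneg fun v ↦
          mul_nonneg (by positivity) (typeProb_nonneg v))
    _ ≤ (n * d + 1) ^ p * r ^ n * (n + 1) ^ p := by
        rw [← mul_sum]
        gcongr
        simpa using sum_typeProb_le (X := Fin n) (σ := ZMod p)
    _ = (n + 1) ^ p * ((n * d + 1) ^ p * r ^ n) := mul_comm _ _

end Intermediate

end RowWeight

section CharExpect

variable {R : Type*} [CommRing R] {n : ℕ} {ψ : AddChar R ℂ}

/-- The expectation of `ψ ⟨ξ, A v⟩`, where `A` is the adjacency matrix of a uniformly random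
permutation of `[n] × [d]`; as a function of `ξ` it is the characteristic function of `A v`. -/
noncomputable def charExpect (ψ : AddChar R ℂ) (d : ℕ) (v ξ : Fin n → R) : ℂ :=
  (∑ P : Equiv.Perm (Fin n × Fin d), ∏ s, ψ (ξ s.1 * v (P s).1)) / (n * d)!

lemma charExpect_symm (d : ℕ) (v ξ : Fin n → R) : charExpect ψ d v ξ = charExpect ψ d ξ v := by
  unfold charExpect
  rw [← Equiv.sum_comp (Equiv.inv (Equiv.Perm (Fin n × Fin d)))]
  congr 1
  refine sum_congr rfl fun P _ ↦ ?_
  rw [← Equiv.prod_comp P]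
  simp [mul_comm]

lemma norm_charExpect_le_one [Finite R] (d : ℕ) (v ξ : Fin n → R) : ‖charExpect ψ d v ξ‖ ≤ 1 := by
  rw [charExpect, norm_div, Complex.norm_natCast, div_le_one (by positivity)]
  refine (norm_sum_le _ _).trans_eq ?_
  simp [norm_prod, AddChar.norm_apply, Fintype.card_perm]

variable [Fintype R] [DecidableEq R]

lemma sum_charExpect (hψ : ψ.IsPrimitive) (d : ℕ) (v : Fin n → R) :
    ∑ ξ, charExpect ψ d v ξ = Fintype.card R ^ n * kernelProb d v := by
  have rows (P : Equiv.Perm (Fin n × Fin d)) (ξ : Fin n → R) :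
      ∏ s, ψ (ξ s.1 * v (P s).1) = ∏ k, ψ (ξ k * ∑ i, v (P (k, i)).1) := by
    rw [Fintype.prod_prod_type]
    refine prod_congr rfl fun k _ ↦ ?_
    rw [mul_sum]
    exact (map_prod ψ.toMonoidHom (fun i ↦ .ofAdd (ξ k * v (P (k, i)).1)) univ).symm
  simp only [charExpect, rows, ← sum_div]
  rw [sum_comm]
  simp only [sum_prod_addChar_mul hψ, Fintype.card_fin, funext_iff, Pi.zero_apply]
  rw [← sum_filter, sum_const, nsmul_eq_mul, kernelProb]
  push_cast
  ring

lemma pow_mul_sum_kernelProb_le (hψ : ψ.IsPrimitive) (d : ℕ) (U S : Finset (Fin n → R)) :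
    Fintype.card R ^ n * ∑ v ∈ U, kernelProb d v ≤
      (∑ v ∈ U, ∑ ξ ∈ Sᶜ, ‖charExpect ψ d v ξ‖) + Fintype.card R ^ n * ∑ ξ ∈ S, kernelProb d ξ +
        ∑ v ∈ Uᶜ, ∑ ξ ∈ S, ‖charExpect ψ d v ξ‖ := by
  have sum_kernel (T : Finset (Fin n → R)) :
      ((Fintype.card R ^ n * ∑ v ∈ T, kernelProb d v : ℝ) : ℂ) =
        ∑ v ∈ T, ∑ ξ, charExpect ψ d v ξ := by
    push_cast
    rw [mul_sum]
    exact sum_congr rfl fun v _ ↦ (sum_charExpect hψ d v).symm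
  have duality : ((Fintype.card R ^ n * ∑ v ∈ U, kernelProb d v : ℝ) : ℂ) =
      (∑ v ∈ U, ∑ ξ ∈ Sᶜ, charExpect ψ d v ξ) +
        ((Fintype.card R ^ n * ∑ ξ ∈ S, kernelProb d ξ : ℝ) : ℂ) -
          ∑ v ∈ Uᶜ, ∑ ξ ∈ S, charExpect ψ d v ξ := by
    have swap : ∑ ξ ∈ S, ∑ v, charExpect ψ d ξ v =
        ∑ v ∈ U, ∑ ξ ∈ S, charExpect ψ d v ξ + ∑ v ∈ Uᶜ, ∑ ξ ∈ S, charExpect ψ d v ξ := by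
      rw [sum_add_sum_compl, sum_comm]
      exact sum_congr rfl fun v _ ↦ sum_congr rfl fun ξ _ ↦ charExpect_symm d ξ v
    rw [sum_kernel, sum_kernel, swap]
    simp only [← sum_add_sum_compl S (charExpect ψ d _), sum_add_distrib]
    ring
  have kernel_nonneg (T : Finset (Fin n → R)) :
      0 ≤ Fintype.card R ^ n * ∑ v ∈ T, kernelProb d v :=
    mul_nonneg (by positivity) (sum_nonneg fun v _ ↦ kernelProb_nonneg d v)
  have norm_sum_sum_le (T T' : Finset (Fin n → R)) :
      ‖∑ v ∈ T, ∑ ξ ∈ T', charExpect ψ d v ξ‖ ≤ ∑ v ∈ T, ∑ ξ ∈ T', ‖charExpect ψ d v ξ‖ :=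
    (norm_sum_le _ _).trans (sum_le_sum fun _ _ ↦ norm_sum_le _ _)
  have := congrArg norm duality
  rw [Complex.norm_of_nonneg (kernel_nonneg U)] at this
  rw [this]
  refine (norm_sub_le _ _).trans (add_le_add ((norm_add_le _ _).trans ?_) (norm_sum_sum_le _ _))
  rw [Complex.norm_of_nonneg (kernel_nonneg S)]
  exact add_le_add_left (norm_sum_sum_le _ _) _

end CharExpect

section Transform

variable {R : Type*} [CommRing R] [Fintype R] {n d : ℕ} {ψ : AddChar R ℂ}

/-- The Fourier transform of `g` with respect to the character `ψ`. -/
noncomputable def charTransform (ψ : AddChar R ℂ) (g : R → ℂ) (b : R) : ℂ := ∑ a, g a * ψ (b * a)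

lemma norm_charTransform_le (g : R → ℂ) (b : R) : ‖charTransform ψ g b‖ ≤ ∑ a, ‖g a‖ := by
  refine (norm_sum_le _ _).trans_eq ?_
  simp [AddChar.norm_apply]

lemma sum_norm_sq_charTransform (hψ : ψ.IsPrimitive) (g : R → ℂ) :
    ∑ b, ‖charTransform ψ g b‖ ^ 2 = Fintype.card R * ∑ a, ‖g a‖ ^ 2 := by
  classical
  have expand (b : R) : ((‖charTransform ψ g b‖ ^ 2 : ℝ) : ℂ) =
      ∑ a, ∑ a', g a * starRingEnd ℂ (g a') * ψ (b * (a - a')) := by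
    rw [Complex.ofReal_pow, ← Complex.mul_conj', charTransform, map_sum, sum_mul_sum]
    refine sum_congr rfl fun a _ ↦ sum_congr rfl fun a' _ ↦ ?_
    rw [map_mul (starRingEnd ℂ), ← AddChar.map_neg_eq_conj, mul_sub, sub_eq_add_neg,
      AddChar.map_add_eq_mul]
    ring
  have parseval : ((∑ b, ‖charTransform ψ g b‖ ^ 2 : ℝ) : ℂ) =
      ((Fintype.card R * ∑ a, ‖g a‖ ^ 2 : ℝ) : ℂ) := by
    rw [Complex.ofReal_sum, sum_congr rfl fun b _ ↦ expand b, sum_comm]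
    push_cast
    rw [mul_sum]
    refine sum_congr rfl fun a _ ↦ ?_
    rw [sum_comm]
    simp only [← mul_sum, AddChar.sum_mulShift _ hψ, sub_eq_zero, eq_comm (a := a)]
    simp [Complex.mul_conj', mul_comm]
  exact_mod_cast parseval

variable [DecidableEq R]

lemma norm_charExpect_le (v ξ : Fin n → R) {Y : ℝ}
    (hY : ∀ g : R → ℂ, (∀ a, ‖g a‖ = letterFreq v a) → ∏ k, ‖charTransform ψ g (ξ k)‖ ≤ Y)
    (hd : 0 < d) : ‖charExpect ψ d v ξ‖ ≤ (n * d + 1) ^ Fintype.card R * Y ^ d := by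
  have : Nonempty (Fin d) := ⟨⟨0, hd⟩⟩
  set f : Fin n × Fin d → R := v ∘ Prod.fst
  set G := ∑ w ∈ typeClass f, ∏ s, ψ (ξ s.1 * w s)
  have charExpect_eq : charExpect ψ d v ξ = G / #(typeClass f) := by
    simpa [charExpect, f, G] using sum_perm_comp_div_factorial f fun w ↦ ∏ s, ψ (ξ s.1 * w s)
  have weighted : typeProb f * ‖G‖ ≤ Y ^ d := by
    have weights : ∑ w ∈ typeClass f, ∏ s, (letterFreq v (w s) * ψ (ξ s.1 * w s)) =
        typeProb f * G := by
      rw [mul_sum]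
      refine sum_congr rfl fun w hw ↦ ?_
      rw [prod_mul_distrib, prod_comp_eq_of_mem_typeClass hw fun a ↦ (letterFreq v a : ℂ),
        typeProb, letterFreq_comp_fst, Complex.ofReal_prod]
    rw [← Real.norm_of_nonneg (typeProb_nonneg f), ← Complex.norm_real, ← norm_mul, ← weights]
    refine norm_sum_typeClass_prod_le f (fun s a ↦ letterFreq v a * ψ (ξ s.1 * a)) fun θ hθ ↦ ?_
    have := hY (fun a ↦ θ a * letterFreq v a) fun a ↦ by
      simp [hθ, abs_of_nonneg (letterFreq_nonneg v a)]
    simp only [Fintype.prod_prod_type, prod_const, card_univ, Fintype.card_fin, prod_pow]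
    refine pow_le_pow_left₀ (prod_nonneg fun _ _ ↦ norm_nonneg _) ?_ d
    simpa only [charTransform, mul_assoc] using this
  have one_le := one_le_card_typeClass_mul_typeProb f
  have card_pos : (0 : ℝ) < #(typeClass f) := mod_cast card_typeClass_pos f
  simp only [Fintype.card_prod, Fintype.card_fin, Nat.cast_mul] at one_le
  rw [charExpect_eq, norm_div, Complex.norm_natCast]
  calc ‖G‖ / #(typeClass f)
      ≤ ‖G‖ / #(typeClass f) *
          ((n * d + 1) ^ Fintype.card R * (#(typeClass f) * typeProb f)) :=
        le_mul_of_one_le_right (by positivity) one_le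
    _ = (n * d + 1) ^ Fintype.card R * (typeProb f * ‖G‖) := by field_simp
    _ ≤ (n * d + 1) ^ Fintype.card R * Y ^ d := by gcongr

end Transform

section ProductBounds

variable {X σ : Type*} [Fintype X]

lemma prod_le_pow_card_of_sum_le {z : X → ℝ} {T : ℝ} (hz : ∀ x, 0 ≤ z x)
    (h : ∑ x, z x ≤ Fintype.card X * T) : ∏ x, z x ≤ T ^ Fintype.card X := by
  rcases isEmpty_or_nonempty X with hX | hX
  · simp
  have card_pos : (0 : ℝ) < Fintype.card X := mod_cast Fintype.card_pos
  have amgm := Real.geom_mean_le_arith_mean univ (fun _ ↦ 1) z (by simp)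
    (by simpa using Fintype.card_pos) (by simpa)
  simp only [Real.rpow_one, sum_const, card_univ, nsmul_eq_mul, mul_one, one_mul] at amgm
  have prod_nonneg := prod_nonneg fun x (_ : x ∈ univ) ↦ hz x
  calc ∏ x, z x = ((∏ x, z x) ^ (Fintype.card X : ℝ)⁻¹) ^ Fintype.card X :=
        (Real.rpow_inv_natCast_pow prod_nonneg Fintype.card_ne_zero).symm
    _ ≤ T ^ Fintype.card X := by
        gcongr
        exact amgm.trans ((div_le_iff₀' card_pos).2 h)

variable [DecidableEq σ]

lemma letterCount_le_hammingDist {w : X → σ} {b c : σ} (hbc : b ≠ c) :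
    letterCount w b ≤ hammingDist w fun _ ↦ c :=
  card_le_card (monotone_filter_right _ fun _ _ hx ↦ hx.trans_ne hbc)

variable [Fintype σ]

lemma sum_comp_eq_sum_letterCount_mul (w : X → σ) (g : σ → ℝ) :
    ∑ x, g (w x) = ∑ a, letterCount w a * g a := by
  rw [← sum_fiberwise' univ w g]
  exact sum_congr rfl fun a _ ↦ (sum_const (g a)).trans (nsmul_eq_mul _ _)

lemma prod_sq_le_pow_mul_typeProb (w : X → σ) {F : σ → ℝ} {T : ℝ} (hF : ∑ b, F b ^ 2 ≤ T) :
    (∏ x, F (w x)) ^ 2 ≤ T ^ Fintype.card X * typeProb w := by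
  rcases isEmpty_or_nonempty X with hX | hX
  · simp [typeProb]
  have card_pos : (0 : ℝ) < Fintype.card X := mod_cast Fintype.card_pos
  have freq_pos (x : X) : 0 < letterFreq w (w x) :=
    div_pos (mod_cast Finset.card_pos.2 ⟨x, by simp⟩) card_pos
  have sum_le : ∑ x, F (w x) ^ 2 / letterFreq w (w x) ≤ Fintype.card X * T := by
    rw [sum_comp_eq_sum_letterCount_mul w fun b ↦ F b ^ 2 / letterFreq w b]
    refine le_trans ?_ (mul_le_mul_of_nonneg_left hF card_pos.le)
    rw [mul_sum]
    refine sum_le_sum fun b _ ↦ ?_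
    rcases eq_or_ne (letterCount w b) 0 with h | h
    · rw [h, Nat.cast_zero, zero_mul]
      positivity
    · rw [letterFreq]
      exact le_of_eq (by field_simp)
  have amgm := prod_le_pow_card_of_sum_le
    (fun x ↦ div_nonneg (sq_nonneg (F (w x))) (freq_pos x).le) sum_le
  rwa [prod_div_distrib, div_le_iff₀ (prod_pos fun x _ ↦ freq_pos x), prod_pow] at amgm

lemma prod_sq_le_pow_hammingDist (w : X → σ) {F : σ → ℝ} (hF0 : ∀ b, 0 ≤ F b) (hF1 : ∀ b, F b ≤ 1)
    {e : ℝ} (he : 0 < e) (hF : ∑ b, F b ^ 2 ≤ 1 + e) {c : σ}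
    (hw : hammingDist w (fun _ ↦ c) ≤ e * letterCount w c) :
    (∏ x, F (w x)) ^ 2 ≤ e ^ hammingDist w fun _ ↦ c := by
  set m := hammingDist w fun _ ↦ c with m_def
  set W : σ → ℝ := fun b ↦ if b = c then 1 else e with W_def
  have W_pos (b : σ) : 0 < W b := by simp only [W]; split_ifs <;> positivity
  have prod_W : ∏ x, W (w x) = e ^ m := by simp [W, prod_ite, m, hammingDist]
  have sum_le : ∑ x, F (w x) ^ 2 / W (w x) ≤ Fintype.card X * 1 := by
    rw [sum_comp_eq_sum_letterCount_mul w fun b ↦ F b ^ 2 / W b, ← add_sum_erase _ _ (mem_univ c)]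
    rw [← add_sum_erase _ _ (mem_univ c)] at hF
    have others : ∑ b ∈ univ.erase c, letterCount w b * (F b ^ 2 / W b) ≤
        m / e * ∑ b ∈ univ.erase c, F b ^ 2 := by
      rw [mul_sum]
      refine sum_le_sum fun b hb ↦ ?_
      have hbc := ne_of_mem_erase hb
      have : (letterCount w b : ℝ) ≤ m := mod_cast letterCount_le_hammingDist hbc
      simp only [W, if_neg hbc, mul_div_assoc', div_mul_eq_mul_div]
      gcongr
    have count_add : (letterCount w c : ℝ) + m = Fintype.card X :=
      mod_cast letterCount_add_hammingDist w c
    have ratio_le : m / e ≤ letterCount w c := (div_le_iff₀' he).2 hw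
    have sq_le : F c ^ 2 ≤ 1 := pow_le_one₀ (hF0 c) (hF1 c)
    calc letterCount w c * (F c ^ 2 / W c) + ∑ b ∈ univ.erase c, letterCount w b * (F b ^ 2 / W b)
        ≤ letterCount w c * F c ^ 2 + m / e * (1 - F c ^ 2 + e) := by
          refine add_le_add (by simp [W]) (others.trans ?_)
          gcongr
          linarith
      _ = letterCount w c * F c ^ 2 + m / e * (1 - F c ^ 2) + m := by field_simp; ring
      _ ≤ letterCount w c * F c ^ 2 + letterCount w c * (1 - F c ^ 2) + m := by
          have := sub_nonneg.2 sq_le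
          gcongr
      _ = Fintype.card X * 1 := by rw [← count_add]; ring
  have amgm := prod_le_pow_card_of_sum_le
    (fun x ↦ div_nonneg (sq_nonneg (F (w x))) (W_pos (w x)).le) sum_le
  rwa [prod_div_distrib, prod_W, one_pow, div_le_one (by positivity), prod_pow] at amgm

lemma card_mul_sum_sq_letterFreq_le [DecidableEq X] [Nonempty X] {t : ℝ} {v : X → σ}
    (hv : v ∈ nearUniform X σ t) :
    Fintype.card σ * ∑ a, letterFreq v a ^ 2 ≤ 1 + (Fintype.card σ * t) ^ 2 := by
  have : Nonempty σ := .map v ‹_›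
  have card_pos : (0 : ℝ) < Fintype.card σ := mod_cast Fintype.card_pos
  set q : ℝ := (Fintype.card σ : ℝ)
  calc q * ∑ a, letterFreq v a ^ 2
      = q * ∑ a, ((letterFreq v a - q⁻¹) ^ 2 + (2 * q⁻¹ * letterFreq v a - q⁻¹ ^ 2)) := by
        congr! 2; ring
    _ = q * ∑ a, (letterFreq v a - q⁻¹) ^ 2 + 1 := by
        rw [sum_add_distrib, sum_sub_distrib, ← mul_sum, sum_letterFreq, sum_const, card_univ,
          nsmul_eq_mul]
        field_simp
        ring
    _ ≤ q * ∑ _a : σ, t ^ 2 + 1 := by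
        refine add_le_add_left (mul_le_mul_of_nonneg_left (sum_le_sum fun a _ ↦ ?_) card_pos.le) 1
        exact sq_le_sq.2 ((mem_nearUniform.1 hv a).trans (le_abs_self t))
    _ = 1 + (q * t) ^ 2 := by
        rw [sum_const, card_univ, nsmul_eq_mul]
        ring

end ProductBounds

section NearConst

variable {n d : ℕ} {M : Type*} [AddCommMonoid M] [DecidableEq M]

lemma kernelProb_zero (n d : ℕ) : kernelProb d (0 : Fin n → M) = 1 := by
  simp [kernelProb, Fintype.card_perm, div_self, Nat.factorial_ne_zero]

lemma kernelProb_eq_zero_of_hammingDist_lt {v : Fin n → M} {c : M} (hc : d • c ≠ 0)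
    (h : hammingDist v (fun _ ↦ c) * d < n) : kernelProb d v = 0 := by
  rw [kernelProb, card_eq_zero.2, Nat.cast_zero, zero_div]
  refine filter_eq_empty_iff.2 fun P _ hP ↦ h.not_ge ?_
  have row_ne_const (k : Fin n) : ∃ i, v (P (k, i)).1 ≠ c := by
    by_contra! hconst
    exact hc (by simpa [hconst] using hP k)
  choose i hi using row_ne_const
  have inj : Function.Injective fun k ↦ P (k, i k) := fun k k' hk ↦
    congrArg Prod.fst (P.injective hk)
  calc n = #(univ.image fun k ↦ P (k, i k)) := by simp [card_image_of_injective _ inj]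
    _ ≤ #((univ.filter fun k ↦ v k ≠ c) ×ˢ (univ : Finset (Fin d))) :=
        card_le_card (image_subset_iff.2 fun k _ ↦ by simp [hi k])
    _ = hammingDist v (fun _ ↦ c) * d := by simp [card_product, hammingDist]

variable [Fintype M]

lemma sum_kernelProb_nearConst_le (hd : 3 ≤ d) (hn : 0 < n) (hM : ∀ c : M, d • c = 0 → c = 0)
    {δ : ℝ} (hδ : Real.exp (Fintype.card M + 2 ^ d) * √δ ≤ 1 / 4) (hdδ : d * δ < 1) :
    ∑ v ∈ nearConst (Fin n) M δ, kernelProb d v ≤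
      1 + 8 * Real.exp (Fintype.card M + 2 ^ d) / √n := by
  set sparse : Finset (Fin n → M) := {v | v ≠ 0 ∧ hammingNorm v ≤ δ * n}
  have support_subset : {v ∈ nearConst (Fin n) M δ | kernelProb d v ≠ 0} ⊆ insert 0 sparse := by
    intro v hv
    obtain ⟨hv, hne⟩ := mem_filter.1 hv
    obtain ⟨c, hc⟩ := mem_nearConst.1 hv
    rw [Fintype.card_fin] at hc
    have c_eq_zero : c = 0 := by
      by_contra hc0
      refine hne (kernelProb_eq_zero_of_hammingDist_lt (mt (hM c) hc0) ?_)
      have hn' : (0 : ℝ) < n := mod_cast hn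
      have : (hammingDist v (fun _ ↦ c) * d : ℝ) < n :=
        calc (hammingDist v (fun _ ↦ c) * d : ℝ) ≤ δ * n * d := by gcongr
          _ = d * δ * n := by ring
          _ < n := mul_lt_of_lt_one_left hn' hdδ
      exact_mod_cast this
    rw [c_eq_zero, ← Pi.zero_def, hammingDist_zero_right] at hc
    rw [mem_insert, mem_filter_univ]
    exact or_iff_not_imp_left.2 fun h0 ↦ ⟨h0, hc⟩
  calc ∑ v ∈ nearConst (Fin n) M δ, kernelProb d v
      = ∑ v ∈ nearConst (Fin n) M δ with kernelProb d v ≠ 0, kernelProb d v :=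
        (sum_filter_ne_zero _).symm
    _ ≤ ∑ v ∈ insert 0 sparse, kernelProb d v :=
        sum_le_sum_of_subset_of_nonneg support_subset fun v _ _ ↦ kernelProb_nonneg d v
    _ = 1 + ∑ v ∈ sparse, kernelProb d v := by
        rw [sum_insert (by simp [sparse]), kernelProb_zero]
    _ ≤ _ := by gcongr; exact sum_kernelProb_sparse_le hd hn hδ

end NearConst

section CharExpectBounds

variable {R : Type*} [CommRing R] [Fintype R] [DecidableEq R] {ψ : AddChar R ℂ} {n d : ℕ}

lemma norm_charTransform_le_one [NeZero n] {v : Fin n → R} {g : R → ℂ}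
    (hg : ∀ a, ‖g a‖ = letterFreq v a) (b : R) : ‖charTransform ψ g b‖ ≤ 1 := by
  refine (norm_charTransform_le g b).trans_eq ?_
  simp only [hg, sum_letterFreq]

lemma norm_charExpect_le_of_notMem_nearConst [NeZero n] (hψ : ψ.IsPrimitive) (hd : 3 ≤ d)
    {v ξ : Fin n → R} {T δ : ℝ} (hδ : δ ≤ 1)
    (hv : Fintype.card R * ∑ a, letterFreq v a ^ 2 ≤ T) (hξ : ξ ∉ nearConst (Fin n) R δ) :
    ‖charExpect ψ d v ξ‖ ≤
      (n * d + 1) ^ Fintype.card R * ((T * √(T * (1 - δ))) ^ n * typeProb ξ) := by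
  have T_nonneg : 0 ≤ T := le_trans (by positivity) hv
  have typeProb_le : typeProb ξ ≤ (1 - δ) ^ n := by
    simpa using typeProb_le_of_notMem_nearConst hξ
  set x := T ^ n * typeProb ξ with hx
  have x_nonneg : 0 ≤ x := mul_nonneg (pow_nonneg T_nonneg n) (typeProb_nonneg ξ)
  refine (norm_charExpect_le (Y := min 1 √x) v ξ (fun g hg ↦ le_min ?_ ?_) (by lia)).trans ?_
  · exact prod_le_one (fun _ _ ↦ norm_nonneg _) fun k _ ↦ norm_charTransform_le_one hg (ξ k)
  · refine Real.le_sqrt_of_sq_le ?_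
    simpa [hx] using prod_sq_le_pow_mul_typeProb ξ (F := fun b ↦ ‖charTransform ψ g b‖) (T := T)
      (by simpa only [sum_norm_sq_charTransform hψ, hg] using hv)
  · gcongr
    calc min 1 √x ^ d ≤ min 1 √x ^ 3 :=
          pow_le_pow_of_le_one (le_min zero_le_one x.sqrt_nonneg) (min_le_left _ _) hd
      _ ≤ √x ^ 3 := pow_le_pow_left₀ (le_min zero_le_one x.sqrt_nonneg) (min_le_right _ _) 3
      _ = x * √x := by rw [pow_succ, Real.sq_sqrt x_nonneg]
      _ ≤ x * √(T * (1 - δ)) ^ n := by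
          gcongr
          refine Real.sqrt_le_iff.2 ⟨by positivity, ?_⟩
          rw [← pow_mul, mul_comm n, pow_mul,
            Real.sq_sqrt (mul_nonneg T_nonneg (sub_nonneg.2 hδ)), mul_pow]
          exact mul_le_mul_of_nonneg_left typeProb_le (pow_nonneg T_nonneg n)
      _ = (T * √(T * (1 - δ))) ^ n * typeProb ξ := by
          rw [hx]
          ring

lemma norm_charExpect_le_pow_hammingDist [NeZero n] (hψ : ψ.IsPrimitive) (hd : 3 ≤ d)
    {v ξ : Fin n → R} {s : ℝ} (hs0 : 0 < s) (hs1 : s ≤ 1)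
    (hv : Fintype.card R * ∑ a, letterFreq v a ^ 2 ≤ 1 + s ^ 2) {c : R}
    (hξ : hammingDist ξ (fun _ ↦ c) ≤ s ^ 2 * letterCount ξ c) :
    ‖charExpect ψ d v ξ‖ ≤
      (n * d + 1) ^ Fintype.card R * (s ^ 3) ^ hammingDist ξ fun _ ↦ c := by
  set m := hammingDist ξ fun _ ↦ c
  refine (norm_charExpect_le (Y := s ^ m) v ξ (fun g hg ↦ ?_) (by lia)).trans ?_
  · refine le_of_sq_le_sq ?_ (by positivity)
    rw [← pow_mul, mul_comm, pow_mul]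
    refine prod_sq_le_pow_hammingDist ξ (fun _ ↦ norm_nonneg _)
      (fun b ↦ norm_charTransform_le_one hg b) (by positivity) ?_ hξ
    simpa only [sum_norm_sq_charTransform hψ, hg] using hv
  · gcongr
    rw [← pow_mul, mul_comm, pow_mul]
    gcongr ?_ ^ m
    exact pow_le_pow_of_le_one hs0.le hs1 hd

end CharExpectBounds

section Scales

/-- Scales for an alphabet of `q` letters and degree `d`: `δ` measures closeness to a constant
vector, `t` and `s` measure closeness to the uniform distribution. Roughly `t ^ 2 ≪ δ ≪ s ^ 2`
and `s ^ 3 ≪ t ^ 2`; the last three fields make the error rates of the Fourier argument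
less than `1`. -/
structure AdmissibleScales (q d : ℕ) (δ t s : ℝ) : Prop where
  δ_pos : 0 < δ
  δ_lt_one : δ < 1
  t_pos : 0 < t
  t_le_one : t ≤ 1
  s_pos : 0 < s
  s_le_one : s ≤ 1
  mul_s_le_one : q * s ≤ 1
  δ_le : δ ≤ (q * s) ^ 2 * (1 - δ)
  mul_δ_lt_one : d * δ < 1
  exp_mul_sqrt_δ_le : Real.exp (q + 2 ^ d) * √δ ≤ 1 / 4
  far_lt_one : (1 + (q * t) ^ 2) * √((1 + (q * t) ^ 2) * (1 - δ)) < 1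
  near_lt : q * (q * s) ^ 3 < t ^ 2 / 4
  entropy_lt : δ * Real.log (1 / δ) + q * δ < s ^ 2 / 4

lemma one_add_mul_sqrt_lt_one {x y : ℝ} (hx0 : 0 ≤ x) (hxy : 7 * x < y) (hy1 : y ≤ 1) :
    (1 + x) * √((1 + x) * (1 - y)) < 1 := by
  have base_nonneg : 0 ≤ (1 + x) * (1 - y) := mul_nonneg (by linarith) (by linarith)
  rw [← sq_lt_one_iff₀ (by positivity), mul_pow, Real.sq_sqrt base_nonneg]
  have cube_le : (1 + x) ^ 3 ≤ 1 + 7 * x := by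
    nlinarith [mul_nonneg hx0 (by linarith : 0 ≤ 1 - x),
      mul_nonneg (sq_nonneg x) (by linarith : 0 ≤ 1 - x)]
  calc (1 + x) ^ 2 * ((1 + x) * (1 - y)) = (1 + x) ^ 3 * (1 - y) := by ring
    _ ≤ (1 + 7 * x) * (1 - y) := by gcongr
    _ < 1 := by nlinarith

lemma mul_log_one_div_pow_le {u : ℝ} (hu : 0 < u) (k : ℕ) :
    u ^ (k + 1) * Real.log (1 / u ^ (k + 1)) ≤ (k + 1) * u ^ k := by
  have log_le : Real.log (1 / u) ≤ 1 / u :=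
    (Real.log_le_sub_one_of_pos (by positivity)).trans (by linarith)
  calc u ^ (k + 1) * Real.log (1 / u ^ (k + 1)) = u ^ (k + 1) * ((k + 1) * Real.log (1 / u)) := by
        rw [← one_div_pow, Real.log_pow]
        push_cast
        rfl
    _ ≤ u ^ (k + 1) * ((k + 1) * (1 / u)) := by gcongr
    _ = (k + 1) * u ^ k := by field_simp; ring

lemma entropy_pow_lt {q u : ℝ} (hu : 0 < u) (hu_small : 100 * u ≤ 1) (hqu : 100 * q * u ≤ 1) :
    u ^ 15 * Real.log (1 / u ^ 15) + q * u ^ 15 < (u ^ 6) ^ 2 / 4 := by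
  have log_term := mul_log_one_div_pow_le hu 14
  have log_small : 100 * 100 * u ^ 14 ≤ u ^ 12 :=
    calc 100 * 100 * u ^ 14 = (100 * u) * (100 * u) * u ^ 12 := by ring
      _ ≤ 1 * 1 * u ^ 12 := by gcongr
      _ = u ^ 12 := by ring
  have linear_small : 100 * (q * u ^ 15) ≤ u ^ 12 :=
    calc 100 * (q * u ^ 15) = (100 * q * u) * u ^ 2 * u ^ 12 := by ring
      _ ≤ 1 * 1 * u ^ 12 := by
        gcongr
        exact pow_le_one₀ hu.le (by linarith)
      _ = u ^ 12 := by ring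
  rw [← pow_mul]
  norm_num at log_term ⊢
  linarith [(by positivity : 0 < u ^ 12)]

-- The scales separate because `2 * 6 < 15 < 2 * 8 < 3 * 6`.
lemma admissibleScales_pow {q d : ℕ} (hq : 1 ≤ q) {u : ℝ} (hu : 0 < u) (hqu : 100 * q ^ 4 * u ≤ 1)
    (hdu : d * u < 1) (hexp : Real.exp (q + 2 ^ d) * u ≤ 1 / 4) :
    AdmissibleScales q d (u ^ 15) (u ^ 8) (u ^ 6) := by
  have hq' : (1 : ℝ) ≤ q := mod_cast hq
  have pow_mul_u_le (k : ℕ) (hk : k ≤ 4) : 100 * q ^ k * u ≤ 1 :=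
    le_trans (by gcongr) hqu
  have u_small : 100 * u ≤ 1 := by simpa using pow_mul_u_le 0 (by simp)
  have u_lt_one : u < 1 := by linarith
  have pow_le (k : ℕ) (hk : k ≠ 0 := by simp) : u ^ k ≤ u := pow_le_of_le_one hu.le u_lt_one.le hk
  refine ⟨by positivity, pow_lt_one₀ hu.le u_lt_one (by simp), by positivity,
    pow_le_one₀ hu.le u_lt_one.le, by positivity, pow_le_one₀ hu.le u_lt_one.le, ?_, ?_, ?_, ?_,
    one_add_mul_sqrt_lt_one (by positivity) ?_ (pow_le_one₀ hu.le u_lt_one.le), ?_, ?_⟩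
  · calc q * u ^ 6 ≤ q * u := by gcongr; exact pow_le 6
      _ ≤ 1 := by linarith [pow_mul_u_le 1 (by simp), (by positivity : 0 < q * u)]
  · calc u ^ 15 = 1 ^ 2 * u ^ 12 * u ^ 3 := by ring
      _ ≤ q ^ 2 * u ^ 12 * (1 - u ^ 15) := by gcongr; linarith [pow_le 3, pow_le 15]
      _ = (q * u ^ 6) ^ 2 * (1 - u ^ 15) := by ring
  · exact (mul_le_mul_of_nonneg_left (pow_le 15) (Nat.cast_nonneg d)).trans_lt hdu
  · refine le_trans ?_ hexp
    gcongr
    exact Real.sqrt_le_iff.2 ⟨hu.le, pow_le_pow_of_le_one hu.le u_lt_one.le (by simp)⟩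
  · calc 7 * (q * u ^ 8) ^ 2 = 7 / 100 * (100 * q ^ 2 * u) * u ^ 15 := by ring
      _ ≤ 7 / 100 * 1 * u ^ 15 := by gcongr; exact pow_mul_u_le 2 (by simp)
      _ < u ^ 15 := by linarith [(by positivity : 0 < u ^ 15)]
  · calc q * (q * u ^ 6) ^ 3 = (100 * q ^ 4 * u) * u * (u ^ 8) ^ 2 / 100 := by ring
      _ ≤ 1 * 1 * (u ^ 8) ^ 2 / 100 := by gcongr
      _ < (u ^ 8) ^ 2 / 4 := by linarith [(by positivity : 0 < (u ^ 8) ^ 2)]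
  · exact entropy_pow_lt hu u_small (by simpa using pow_mul_u_le 1 (by simp))

lemma exists_admissibleScales {q : ℕ} (hq : 1 ≤ q) (d : ℕ) :
    ∃ δ t s, AdmissibleScales q d δ t s := by
  set M : ℝ := 100 * q ^ 4 + d + 4 * Real.exp (q + 2 ^ d)
  have M_pos : 0 < M := by positivity
  have mul_inv_lt_one {x : ℝ} (hx : x < M) : x * M⁻¹ < 1 := by
    rwa [← div_eq_mul_inv, div_lt_one M_pos]
  have exp_pos := Real.exp_pos (q + 2 ^ d)
  have q_pow_pos : 0 < (q : ℝ) ^ 4 := by positivity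
  refine ⟨_, _, _, admissibleScales_pow hq (inv_pos.2 M_pos) (mul_inv_lt_one ?_).le
    (mul_inv_lt_one ?_) ?_⟩
  · simp only [M]; linarith [d.cast_nonneg (α := ℝ)]
  · simp only [M]; linarith
  · have := mul_inv_lt_one (x := 4 * Real.exp (q + 2 ^ d)) (by
      simp only [M]; linarith [d.cast_nonneg (α := ℝ)])
    linarith

end Scales

section CharExpectSums

variable {R : Type*} [CommRing R] [Fintype R] [DecidableEq R] {ψ : AddChar R ℂ} {n d : ℕ}

lemma sum_nearConst_norm_charExpect_le {δ : ℝ} (hδ0 : 0 < δ) (hδ1 : δ < 1) (v : Fin n → R) :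
    ∑ ξ ∈ nearConst (Fin n) R δ, ‖charExpect ψ d v ξ‖ ≤ Fintype.card R *
      Real.exp (n * (δ * Real.log (1 / δ) + Fintype.card R * δ)) := by
  refine sum_nearConst_le (fun _ ↦ norm_nonneg _) fun c ↦ ?_
  refine (sum_le_card_nsmul _ _ 1 fun ξ _ ↦ norm_charExpect_le_one d v ξ).trans ?_
  simpa using card_hammingDist_le_le_exp (X := Fin n) (fun _ ↦ c) hδ0 hδ1

variable [NeZero n]

lemma sum_compl_nearConst_norm_charExpect_le (hψ : ψ.IsPrimitive) (hd : 3 ≤ d) {δ t : ℝ}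
    (hδ : δ ≤ 1) {v : Fin n → R} (hv : v ∈ nearUniform (Fin n) R t) :
    ∑ ξ ∈ (nearConst (Fin n) R δ)ᶜ, ‖charExpect ψ d v ξ‖ ≤
      (n + 1) ^ Fintype.card R * ((n * d + 1) ^ Fintype.card R *
        ((1 + (Fintype.card R * t) ^ 2) * √((1 + (Fintype.card R * t) ^ 2) * (1 - δ))) ^ n) := by
  set T := 1 + (Fintype.card R * t) ^ 2
  have sum_typeProb : ∑ ξ : Fin n → R, typeProb ξ ≤ (n + 1) ^ Fintype.card R := by
    simpa using sum_typeProb_le (X := Fin n) (σ := R)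
  calc ∑ ξ ∈ (nearConst (Fin n) R δ)ᶜ, ‖charExpect ψ d v ξ‖
      ≤ ∑ ξ ∈ (nearConst (Fin n) R δ)ᶜ,
          (n * d + 1) ^ Fintype.card R * ((T * √(T * (1 - δ))) ^ n * typeProb ξ) :=
        sum_le_sum fun ξ hξ ↦ norm_charExpect_le_of_notMem_nearConst hψ hd hδ
          (card_mul_sum_sq_letterFreq_le hv) (mem_compl.1 hξ)
    _ ≤ ∑ ξ, (n * d + 1) ^ Fintype.card R * ((T * √(T * (1 - δ))) ^ n * typeProb ξ) :=
        sum_le_univ_sum_of_nonneg fun ξ ↦ by have := typeProb_nonneg ξ; positivity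
    _ = (∑ ξ : Fin n → R, typeProb ξ) *
          ((n * d + 1) ^ Fintype.card R * (T * √(T * (1 - δ))) ^ n) := by
        rw [sum_mul]
        exact sum_congr rfl fun _ _ ↦ by ring
    _ ≤ _ := by gcongr

lemma sum_nearConst_norm_charExpect_le_of_sum_sq_le (hψ : ψ.IsPrimitive) (hd : 3 ≤ d)
    {δ s : ℝ} (hs0 : 0 < s) (hs1 : s ≤ 1) (hδ : δ ≤ s ^ 2 * (1 - δ)) {v : Fin n → R}
    (hv : Fintype.card R * ∑ a, letterFreq v a ^ 2 ≤ 1 + s ^ 2) :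
    ∑ ξ ∈ nearConst (Fin n) R δ, ‖charExpect ψ d v ξ‖ ≤ Fintype.card R *
      ((n * d + 1) ^ Fintype.card R * Real.exp (n * (Fintype.card R * s ^ 3))) := by
  refine sum_nearConst_le (fun _ ↦ norm_nonneg _) fun c ↦ ?_
  have count_le (ξ : Fin n → R) (hξ : hammingDist ξ (fun _ ↦ c) ≤ δ * Fintype.card (Fin n)) :
      hammingDist ξ (fun _ ↦ c) ≤ s ^ 2 * letterCount ξ c := by
    have count_add : (letterCount ξ c : ℝ) + hammingDist ξ (fun _ ↦ c) = Fintype.card (Fin n) :=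
      mod_cast letterCount_add_hammingDist ξ c
    calc (hammingDist ξ (fun _ ↦ c) : ℝ) ≤ s ^ 2 * (1 - δ) * Fintype.card (Fin n) := by
          refine hξ.trans ?_
          gcongr
      _ ≤ s ^ 2 * letterCount ξ c := by
          rw [mul_assoc]
          gcongr
          linarith
  calc ∑ ξ : Fin n → R with hammingDist ξ (fun _ ↦ c) ≤ δ * Fintype.card (Fin n),
        ‖charExpect ψ d v ξ‖
      ≤ ∑ ξ : Fin n → R with hammingDist ξ (fun _ ↦ c) ≤ δ * Fintype.card (Fin n),
          (n * d + 1) ^ Fintype.card R * (s ^ 3) ^ hammingDist ξ fun _ ↦ c :=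
        sum_le_sum fun ξ hξ ↦ norm_charExpect_le_pow_hammingDist hψ hd hs0 hs1 hv
          (count_le ξ ((mem_filter_univ ξ).1 hξ))
    _ ≤ ∑ ξ : Fin n → R, (n * d + 1) ^ Fintype.card R * (s ^ 3) ^ hammingDist ξ fun _ ↦ c :=
        sum_le_univ_sum_of_nonneg fun _ ↦ by positivity
    _ ≤ (n * d + 1) ^ Fintype.card R * Real.exp (n * (Fintype.card R * s ^ 3)) := by
        rw [← mul_sum]
        gcongr
        simpa using sum_pow_hammingDist_le_exp (X := Fin n) (fun _ ↦ c) (pow_nonneg hs0.le 3)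

lemma sum_compl_nearUniform_sum_nearConst_norm_charExpect_le (hψ : ψ.IsPrimitive) (hd : 3 ≤ d)
    {δ t s : ℝ} (h : AdmissibleScales (Fintype.card R) d δ t s) :
    ∑ v ∈ (nearUniform (Fin n) R t)ᶜ, ∑ ξ ∈ nearConst (Fin n) R δ, ‖charExpect ψ d v ξ‖ ≤
      Fintype.card R ^ n * (2 * Fintype.card R ^ 2 * ((n * d + 1) ^ Fintype.card R *
          Real.exp (Fintype.card R * (Fintype.card R * s) ^ 3 - t ^ 2 / 4) ^ n +
        Real.exp (δ * Real.log (1 / δ) + Fintype.card R * δ - s ^ 2 / 4) ^ n)) := by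
  set q : ℝ := (Fintype.card R : ℝ)
  have q_pos : 0 < q := Nat.cast_pos.2 Fintype.card_pos
  have card_compl_le {t : ℝ} (ht0 : 0 < t) (ht1 : t ≤ 1) : (#(nearUniform (Fin n) R t)ᶜ : ℝ) ≤
      2 * q * (q ^ n * Real.exp (n * -(t ^ 2 / 4))) := by
    simpa using card_compl_nearUniform_le (X := Fin n) (σ := R) ht0 ht1
  have uniform_part : ∑ v ∈ (nearUniform (Fin n) R t)ᶜ with v ∈ nearUniform (Fin n) R s,
      ∑ ξ ∈ nearConst (Fin n) R δ, ‖charExpect ψ d v ξ‖ ≤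
        2 * q * (q ^ n * Real.exp (n * -(t ^ 2 / 4))) *
          (q * ((n * d + 1) ^ Fintype.card R * Real.exp (n * (q * (q * s) ^ 3)))) := by
    refine (sum_le_card_nsmul _ _ _ fun v hv ↦
      sum_nearConst_norm_charExpect_le_of_sum_sq_le hψ hd (mul_pos q_pos h.s_pos) h.mul_s_le_one
        h.δ_le (card_mul_sum_sq_letterFreq_le (mem_filter.1 hv).2)).trans ?_
    rw [nsmul_eq_mul]
    gcongr
    exact (Nat.cast_le.2 (card_filter_le _ _)).trans (card_compl_le h.t_pos h.t_le_one)
  have other_part : ∑ v ∈ (nearUniform (Fin n) R t)ᶜ with v ∉ nearUniform (Fin n) R s,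
      ∑ ξ ∈ nearConst (Fin n) R δ, ‖charExpect ψ d v ξ‖ ≤
        2 * q * (q ^ n * Real.exp (n * -(s ^ 2 / 4))) *
          (q * Real.exp (n * (δ * Real.log (1 / δ) + q * δ))) := by
    refine (sum_le_card_nsmul _ _ _ fun v _ ↦
      sum_nearConst_norm_charExpect_le h.δ_pos h.δ_lt_one v).trans ?_
    rw [nsmul_eq_mul]
    gcongr
    refine (Nat.cast_le.2 (card_le_card fun v hv ↦ ?_)).trans (card_compl_le h.s_pos h.s_le_one)
    exact mem_compl.2 (mem_filter.1 hv).2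
  rw [← sum_filter_add_sum_filter_not _ (· ∈ nearUniform (Fin n) R s)]
  refine (add_le_add uniform_part other_part).trans_eq ?_
  simp only [← Real.exp_nat_mul]
  simp only [sub_eq_neg_add, mul_add, Real.exp_add]
  ring

lemma sum_kernelProb_nearUniform_le (hψ : ψ.IsPrimitive) (hd : 3 ≤ d)
    (hR : ∀ c : R, d • c = 0 → c = 0) {δ t s : ℝ} (h : AdmissibleScales (Fintype.card R) d δ t s) :
    ∑ v ∈ nearUniform (Fin n) R t, kernelProb d v ≤
      1 + 8 * Real.exp (Fintype.card R + 2 ^ d) / √n +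
        (n + 1) ^ Fintype.card R * ((n * d + 1) ^ Fintype.card R *
          ((1 + (Fintype.card R * t) ^ 2) * √((1 + (Fintype.card R * t) ^ 2) * (1 - δ))) ^ n) +
        2 * Fintype.card R ^ 2 * ((n * d + 1) ^ Fintype.card R *
          Real.exp (Fintype.card R * (Fintype.card R * s) ^ 3 - t ^ 2 / 4) ^ n +
        Real.exp (δ * Real.log (1 / δ) + Fintype.card R * δ - s ^ 2 / 4) ^ n) := by
  set q : ℝ := (Fintype.card R : ℝ)
  have q_pow_pos : 0 < q ^ n := pow_pos (Nat.cast_pos.2 Fintype.card_pos) n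
  have far : ∑ v ∈ nearUniform (Fin n) R t, ∑ ξ ∈ (nearConst (Fin n) R δ)ᶜ, ‖charExpect ψ d v ξ‖ ≤
      q ^ n * ((n + 1) ^ Fintype.card R * ((n * d + 1) ^ Fintype.card R *
          ((1 + (q * t) ^ 2) * √((1 + (q * t) ^ 2) * (1 - δ))) ^ n)) := by
    refine (sum_le_card_nsmul _ _ _ fun v hv ↦
      sum_compl_nearConst_norm_charExpect_le hψ hd h.δ_lt_one.le hv).trans ?_
    rw [nsmul_eq_mul]
    gcongr
    have : (#(nearUniform (Fin n) R t) : ℝ) ≤ Fintype.card (Fin n → R) := mod_cast card_le_univ _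
    simpa using this
  have near := sum_compl_nearUniform_sum_nearConst_norm_charExpect_le (n := n) hψ hd h
  have kernel := mul_le_mul_of_nonneg_left (sum_kernelProb_nearConst_le hd (NeZero.pos n) hR
    h.exp_mul_sqrt_δ_le h.mul_δ_lt_one) q_pow_pos.le
  refine le_of_mul_le_mul_left ((pow_mul_sum_kernelProb_le hψ d _ (nearConst (Fin n) R δ)).trans
    ((add_le_add_three far kernel near).trans_eq ?_)) q_pow_pos
  ring

end CharExpectSums

section Asymptotics

open Filter Topology

lemma tendsto_pow_mul_pow_mul_pow_zero (k l d : ℕ) {r : ℝ} (hr0 : 0 ≤ r) (hr1 : r < 1) :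
    Tendsto (fun n : ℕ ↦ ((n : ℝ) + 1) ^ k * ((n * d + 1) ^ l * r ^ n)) atTop (𝓝 0) := by
  have lim := (tendsto_pow_const_mul_const_pow_of_abs_lt_one (k + l)
    (by rwa [abs_of_nonneg hr0] : |r| < 1)).const_mul (2 ^ k * (d + 1 : ℝ) ^ l)
  rw [mul_zero] at lim
  refine squeeze_zero' (.of_forall fun n ↦ by positivity) ?_ lim
  filter_upwards [eventually_ge_atTop 1] with n hn
  have hn' : (1 : ℝ) ≤ n := mod_cast hn
  calc ((n : ℝ) + 1) ^ k * ((n * d + 1) ^ l * r ^ n)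
      ≤ (2 * n) ^ k * (((d + 1) * n) ^ l * r ^ n) := by gcongr <;> linarith
    _ = 2 ^ k * (d + 1) ^ l * (n ^ (k + l) * r ^ n) := by
      rw [mul_pow, mul_pow, pow_add]
      ring

lemma tendsto_div_sqrt_zero (c : ℝ) : Tendsto (fun n : ℕ ↦ c / √n) atTop (𝓝 0) :=
  tendsto_const_nhds.div_atTop (Real.tendsto_sqrt_atTop.comp tendsto_natCast_atTop_atTop)

lemma sum_kernelProb_ne_zero_le_add_add {M : Type*} [AddCommMonoid M] [Fintype M] [DecidableEq M]
    (n d : ℕ) (δ t : ℝ) :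
    ∑ v : Fin n → M with v ≠ 0, kernelProb d v ≤
      ∑ v : Fin n → M with v ≠ 0 ∧ hammingNorm v ≤ δ * n, kernelProb d v +
      (∑ v : Fin n → M with ¬ hammingNorm v ≤ δ * n ∧ v ∉ nearUniform (Fin n) M t,
        kernelProb d v +
      ∑ v ∈ nearUniform (Fin n) M t, kernelProb d v) := by
  rw [← sum_filter_add_sum_filter_not _ fun v ↦ (hammingNorm v : ℝ) ≤ δ * n, filter_filter,
    filter_filter]
  gcongr
  rw [← sum_filter_not_add_sum_filter _ (· ∈ nearUniform (Fin n) M t), filter_filter,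
    filter_filter]
  gcongr ?_ + ?_ <;> refine sum_le_sum_of_subset_of_nonneg (fun v hv ↦ ?_)
    fun v _ _ ↦ kernelProb_nonneg d v
  · rw [mem_filter_univ] at hv ⊢
    exact ⟨hv.1.2, hv.2⟩
  · exact ((mem_filter_univ v).1 hv).2

lemma exists_tendsto_sum_kernelProb_ne_zero_le {d p : ℕ} [Fact p.Prime] (hd : 3 ≤ d)
    (hgcd : p.gcd d = 1) :
    ∃ g : ℕ → ℝ, Tendsto g atTop (𝓝 0) ∧
      ∀ n, 0 < n → ∑ v : Fin n → ZMod p with v ≠ 0, kernelProb d v ≤ 1 + g n := by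
  obtain ⟨δ, t, s, hS⟩ := exists_admissibleScales (Fact.out : p.Prime).one_le d
  obtain ⟨r, hr0, hr1, intermediate_le⟩ :=
    exists_sum_kernelProb_intermediate_le hd hgcd hS.δ_pos hS.t_pos
  rw [← ZMod.card p] at hS
  have sparse_lim := tendsto_div_sqrt_zero (8 * Real.exp (Fintype.card (ZMod p) + 2 ^ d))
  have intermediate_lim := tendsto_pow_mul_pow_mul_pow_zero p p d hr0 hr1
  have far_lim := tendsto_pow_mul_pow_mul_pow_zero (Fintype.card (ZMod p))
    (Fintype.card (ZMod p)) d (by positivity) hS.far_lt_one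
  have near_lim := tendsto_pow_mul_pow_mul_pow_zero 0 (Fintype.card (ZMod p)) d
    (Real.exp_nonneg _) (Real.exp_lt_one_iff.2 (sub_neg.2 hS.near_lt))
  have entropy_lim := tendsto_pow_mul_pow_mul_pow_zero 0 0 d
    (Real.exp_nonneg _) (Real.exp_lt_one_iff.2 (sub_neg.2 hS.entropy_lt))
  simp only [pow_zero, one_mul] at near_lim entropy_lim
  refine ⟨_, by simpa only [add_zero, mul_zero] using
    (sparse_lim.add intermediate_lim).add ((sparse_lim.add far_lim).add
      ((near_lim.add entropy_lim).const_mul (2 * (Fintype.card (ZMod p) : ℝ) ^ 2))),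
    fun n hn ↦ ?_⟩
  have : NeZero n := ⟨hn.ne'⟩
  have sparse_le := sum_kernelProb_sparse_le (M := ZMod p) hd hn hS.exp_mul_sqrt_δ_le
  have nearUniform_le := sum_kernelProb_nearUniform_le (n := n) (ZMod.isPrimitive_stdAddChar p) hd
    (fun c ↦ eq_zero_of_nsmul_eq_zero hgcd) hS
  linarith [sum_kernelProb_ne_zero_le_add_add (M := ZMod p) n d δ t, intermediate_le n hn]

lemma eventually_sum_kernelProb_ne_zero_le {d p : ℕ} [Fact p.Prime] (hd : 3 ≤ d)
    (hgcd : p.gcd d = 1) {ε : ℝ} (hε : 0 < ε) :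
    ∀ᶠ n : ℕ in atTop, ∑ v : Fin n → ZMod p with v ≠ 0, kernelProb d v ≤ 1 + ε := by
  obtain ⟨g, hg, sum_le⟩ := exists_tendsto_sum_kernelProb_ne_zero_le hd hgcd
  filter_upwards [eventually_gt_atTop 0, hg.eventually_le_const hε] with n hn hgn
  exact (sum_le n hn).trans (by gcongr)

end Asymptotics

section Singular

lemma card_sub_one_le_card_mulVec_eq_zero {ι F : Type*} [Fintype ι] [DecidableEq ι] [Field F]
    [Fintype F] [DecidableEq F] {A : Matrix ι ι F} (hA : A.det = 0) :
    Fintype.card F - 1 ≤ #{v : ι → F | v ≠ 0 ∧ A.mulVec v = 0} := by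
  obtain ⟨v, hv0, hv⟩ := Matrix.exists_mulVec_eq_zero_iff.2 hA
  rw [← card_univ, ← card_erase_of_mem (mem_univ 0)]
  refine card_le_card_of_injOn (fun c ↦ c • v) (fun c hc ↦ ?_) (smul_left_injective F hv0).injOn
  rw [mem_coe, mem_filter_univ]
  exact ⟨smul_ne_zero (ne_of_mem_erase hc) hv0, by rw [Matrix.mulVec_smul, hv, smul_zero]⟩

lemma adjMat_map_mulVec {R : Type*} [Ring R] {n d : ℕ} (P : Equiv.Perm (Fin n × Fin d))
    (v : Fin n → R) (k : Fin n) :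
    ((adjMat n d P).map (Int.cast : ℤ → R)).mulVec v k = ∑ i, v (P (k, i)).1 := by
  rw [← sum_fiberwise' univ (fun i ↦ (P (k, i)).1) v]
  simp [Matrix.mulVec, dotProduct, adjMat]

lemma card_singular_mul_le_sum_kernelProb (n d : ℕ) (F : Type*) [Field F] [Fintype F]
    [DecidableEq F] :
    (#{P : Equiv.Perm (Fin n × Fin d) | ((adjMat n d P).map (Int.cast : ℤ → F)).det = 0} : ℝ) *
        (Fintype.card F - 1) ≤
      (n * d)! * ∑ v : Fin n → F with v ≠ 0, kernelProb d v := by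
  set A := fun P : Equiv.Perm (Fin n × Fin d) ↦ (adjMat n d P).map (Int.cast : ℤ → F)
  have kernel_count (v : Fin n → F) :
      (n * d)! * kernelProb d v = #{P : Equiv.Perm (Fin n × Fin d) | (A P).mulVec v = 0} := by
    rw [kernelProb, mul_div_cancel₀ _ (by positivity)]
    simp only [A, funext_iff, adjMat_map_mulVec, Pi.zero_apply]
  have double_count : (n * d)! * ∑ v : Fin n → F with v ≠ 0, kernelProb d v =
      ∑ P : Equiv.Perm (Fin n × Fin d), (#{v | v ≠ 0 ∧ (A P).mulVec v = 0} : ℝ) := by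
    simp only [mul_sum, kernel_count, ← filter_filter]
    exact_mod_cast sum_card_bipartiteAbove_eq_sum_card_bipartiteBelow
      (s := {v : Fin n → F | v ≠ 0}) (t := univ) fun v P ↦ (A P).mulVec v = 0
  rw [double_count, ← nsmul_eq_mul]
  refine (card_nsmul_le_sum _ _ _ fun P hP ↦ ?_).trans
    (sum_le_univ_sum_of_nonneg fun P ↦ Nat.cast_nonneg _)
  rw [← Nat.cast_one, ← Nat.cast_sub Fintype.card_pos]
  exact_mod_cast card_sub_one_le_card_mulVec_eq_zero ((mem_filter_univ P).1 hP)

end Singular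

/-- For fixed `d ≥ 3` and an odd prime `p` with `gcd(p,d) = 1`, for every `ε > 0`,
eventually in `n`, the number of permutations `P` of `[n]×[d]` with `A(P)` singular
over `𝔽_p` is at most `((1+ε)/(p-1)) (nd)!`. -/
theorem directed_singular_Fp (d : ℕ) (hd : 3 ≤ d) (p : ℕ) [Fact p.Prime] (hp : Odd p)
    (hgcd : Nat.gcd p d = 1) (ε : ℝ) (hε : 0 < ε) :
    ∃ N : ℕ, ∀ n : ℕ, N ≤ n →
      ((Finset.univ.filter (fun P : Equiv.Perm (Fin n × Fin d) =>
          ((adjMat n d P).map (Int.cast : ℤ → ZMod p)).det = 0)).card : ℝ)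
        ≤ (1 + ε) / ((p : ℝ) - 1) * ((n * d).factorial : ℝ) := by
  obtain ⟨N, hN⟩ := Filter.eventually_atTop.1 (eventually_sum_kernelProb_ne_zero_le hd hgcd hε)
  refine ⟨N, fun n hn ↦ ?_⟩
  have one_lt : (1 : ℝ) < p := mod_cast (Fact.out : p.Prime).one_lt
  have count := card_singular_mul_le_sum_kernelProb n d (ZMod p)
  rw [ZMod.card] at count
  rw [div_mul_eq_mul_div, le_div_iff₀ (sub_pos.2 one_lt), mul_comm (1 + ε)]
  exact count.trans (mul_le_mul_of_nonneg_left (hN n hn) (Nat.cast_nonneg _))
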